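/- arXiv:2001.07281 — 14 statements merged into one kernel-verified Lean document; each statement's English description precedes it below -/
import Mathlib

section
/- Let M be the adjacency matrix of a directed (n,k,b,a,t)-Deza graph with witnessing (0,1)-matrices X and Y (so M·J = J·M = k·J, M² = a·X + b·Y + t·I and X + Y + I = J), and suppose a ≠ b. Then, viewing all matrices over the integers, (b−a)·(X·𝟙) = (b(n−1) − k² + t)·𝟙 and (a−b)·(Y·𝟙) = (a(n−1) − k² + t)·𝟙, where 𝟙 is the all-ones column vector; i.e., every row of X has the same sum α = (b(n−1)−k²+t)/(b−a) and every row of Y has the same sum β = (a(n−1)−k²+t)/(a−b), independent of the vertex. -/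
open Matrix Kronecker

/-- The all-ones square matrix over ℤ. -/
def allOnes (ι : Type*) : Matrix ι ι ℤ := Matrix.of fun _ _ => 1

/-- A (0,1)-matrix. -/
def IsZeroOne {ι κ : Type*} (M : Matrix ι κ ℤ) : Prop := ∀ i j, M i j = 0 ∨ M i j = 1

/-- for a directed (n,k,b,a,t)-Deza graph with witnessing matrices X, Y and
a ≠ b, every row of X sums to α = (b(n−1)−k²+t)/(b−a) and every row of Y sums to
β = (a(n−1)−k²+t)/(a−b). -/
theorem deza_digraph_row_sums (n : ℕ) (a b k t : ℤ)
    (h0a : 0 ≤ a) (hab : a ≤ b) (hbk : b ≤ k) (hkn : k ≤ (n : ℤ))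
    (h0t : 0 ≤ t) (htk : t ≤ k)
    (M X Y : Matrix (Fin n) (Fin n) ℤ)
    (hM01 : IsZeroOne M) (hX01 : IsZeroOne X) (hY01 : IsZeroOne Y)
    (hdiag : ∀ i, M i i = 0)
    (hMJ : M * allOnes (Fin n) = k • allOnes (Fin n))
    (hJM : allOnes (Fin n) * M = k • allOnes (Fin n))
    (hM2 : M * M = a • X + b • Y + t • (1 : Matrix (Fin n) (Fin n) ℤ))
    (hXYI : X + Y + 1 = allOnes (Fin n))
    (hne : a ≠ b) :
    ((b - a) • (X *ᵥ fun _ => (1 : ℤ)) = (fun _ => b * ((n : ℤ) - 1) - k ^ 2 + t)) ∧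
    ((a - b) • (Y *ᵥ fun _ => (1 : ℤ)) = (fun _ => a * ((n : ℤ) - 1) - k ^ 2 + t)) := by
  have e1 : M *ᵥ (fun _ => (1 : ℤ)) = fun _ => k := by
    funext i
    have := congrFun (congrFun hMJ i) i
    simpa [allOnes, Matrix.mul_apply, Matrix.mulVec, dotProduct] using this
  have e2 : (M * M) *ᵥ (fun _ => (1 : ℤ)) = fun _ => k ^ 2 := by
    rw [← Matrix.mulVec_mulVec, e1]
    have : (fun _ : Fin n => k) = k • (fun _ => (1 : ℤ)) := by
      funext i; simp
    rw [this, Matrix.mulVec_smul, e1]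
    funext i; simp [sq]
  have e3 : (X + Y + 1) *ᵥ (fun _ => (1 : ℤ)) = fun _ => (n : ℤ) := by
    rw [hXYI]; funext i; simp [allOnes, Matrix.mulVec, dotProduct]
  rw [hM2] at e2
  simp only [Matrix.add_mulVec, Matrix.smul_mulVec, Matrix.one_mulVec] at e2 e3
  constructor
  all_goals
    funext i
    have f2 := congrFun e2 i
    have f3 := congrFun e3 i
    simp only [Pi.add_apply, Pi.smul_apply, smul_eq_mul] at f2 f3 ⊢
  · linear_combination b * f3 - f2
  · linear_combination a * f3 - f2
end

section
/- Let M be the adjacency matrix of a directed (n,k,b,a,t)-Deza graph with witnessing (0,1)-matrices X and Y, and suppose a ≠ b. Then the integer b−a divides both b(n−1) − k² + t and a(n−1) − k² + t. Moreover, if a < b and both X ≠ 0 and Y ≠ 0, then a(n−1) < k² − t < b(n−1). -/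
open Matrix Kronecker

/-- divisibility conditions for the parameters of a directed
(n,k,b,a,t)-Deza graph with a ≠ b, and the inequality a(n−1) < k²−t < b(n−1) when a < b
and both X and Y are nonzero. -/
theorem deza_digraph_divisibility (n : ℕ) (a b k t : ℤ)
    (h0a : 0 ≤ a) (hab : a ≤ b) (hbk : b ≤ k) (hkn : k ≤ (n : ℤ))
    (h0t : 0 ≤ t) (htk : t ≤ k)
    (M X Y : Matrix (Fin n) (Fin n) ℤ)
    (hM01 : IsZeroOne M) (hX01 : IsZeroOne X) (hY01 : IsZeroOne Y)
    (hdiag : ∀ i, M i i = 0)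
    (hMJ : M * allOnes (Fin n) = k • allOnes (Fin n))
    (hJM : allOnes (Fin n) * M = k • allOnes (Fin n))
    (hM2 : M * M = a • X + b • Y + t • (1 : Matrix (Fin n) (Fin n) ℤ))
    (hXYI : X + Y + 1 = allOnes (Fin n))
    (hne : a ≠ b) :
    ((b - a) ∣ (b * ((n : ℤ) - 1) - k ^ 2 + t)) ∧
    ((b - a) ∣ (a * ((n : ℤ) - 1) - k ^ 2 + t)) ∧
    (a < b → X ≠ 0 → Y ≠ 0 →
      a * ((n : ℤ) - 1) < k ^ 2 - t ∧ k ^ 2 - t < b * ((n : ℤ) - 1)) := by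
  have key : ∀ i, (∑ j, X i j) * (b - a) = b * ((n : ℤ) - 1) - k ^ 2 + t ∧
      (∑ j, Y i j) * (b - a) = k ^ 2 - t - a * ((n : ℤ) - 1) := by
    intro i
    have hM1 : ∀ i, ∑ j, M i j = k := by
      intro i
      have h := congrFun (congrFun hMJ i) i
      simpa [Matrix.mul_apply, allOnes] using h
    have h1 : ∑ j, (M * M) i j = k ^ 2 := by
      simp only [Matrix.mul_apply]
      rw [Finset.sum_comm]
      simp only [← Finset.mul_sum, hM1]
      rw [← Finset.sum_mul, hM1]
      ring
    have h2 : ∑ j, (M * M) i j = a * (∑ j, X i j) + b * (∑ j, Y i j) + t := by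
      rw [hM2]
      simp only [Matrix.add_apply, Matrix.smul_apply, smul_eq_mul, Matrix.one_apply,
        Finset.sum_add_distrib, Finset.mul_sum]
      simp
    have h3 : (∑ j, X i j) + (∑ j, Y i j) + 1 = (n : ℤ) := by
      have h : ∑ j, (X + Y + 1) i j = ∑ j, allOnes (Fin n) i j := by rw [hXYI]
      simpa [Finset.sum_add_distrib, Matrix.one_apply, allOnes] using h
    rw [h1] at h2
    rw [h2, ← h3]
    constructor <;> ring
  have pos : ∀ Z : Matrix (Fin n) (Fin n) ℤ, IsZeroOne Z → Z ≠ 0 → ∃ i, 0 < ∑ j, Z i j := by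
    intro Z hZ hZ0
    by_contra! hcon
    apply hZ0
    have hnn : ∀ i j, 0 ≤ Z i j := fun i j => by rcases hZ i j with h | h <;> omega
    ext i j
    have h := Finset.single_le_sum (f := fun j => Z i j) (fun j _ => hnn i j) (Finset.mem_univ j)
    have h' := hcon i
    have h'' := hnn i j
    simp only [Matrix.zero_apply] at *
    omega
  have hlt : a < b := lt_of_le_of_ne hab hne
  have hn : 0 < n := by omega
  obtain ⟨hx, hy⟩ := key ⟨0, hn⟩
  refine ⟨⟨_, by rw [← hx, mul_comm]⟩, ⟨-∑ j, Y ⟨0, hn⟩ j, by linarith⟩, ?_⟩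
  intro _ hX hY
  have hba : 0 < b - a := by omega
  obtain ⟨i, hi⟩ := pos X hX01 hX
  obtain ⟨i', hi'⟩ := pos Y hY01 hY
  have e1 := (key i).1
  have e2 := (key i').2
  have p1 := mul_pos hi hba
  have p2 := mul_pos hi' hba
  constructor <;> linarith
end

section
/- Let M₁ be the adjacency matrix of a directed strongly regular graph with parameters (n,k,λ,λ,t) (i.e., with λ = μ), and let n' ≥ 1. Then M₁ ⊗ J_{n'} is the adjacency matrix of a directed Deza graph with parameters (nn', kn', tn', λn', tn'); that is, M := M₁ ⊗ J_{n'} is an nn'×nn' (0,1)-matrix with zero diagonal satisfying M·J = J·M = kn'·J and M² = λn'·X + tn'·Y + tn'·I for some (0,1)-matrices X, Y with X + Y + I = J. -/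
open Matrix Kronecker

/-- if M₁ is the adjacency matrix of a DSRG with parameters (n,k,λ,λ,t)
and n' ≥ 1, then M₁ ⊗ J_{n'} is the adjacency matrix of a directed Deza graph with
parameters (nn', kn', tn', λn', tn'). -/
theorem deza_digraph_dsrg_blow_up (n n' : ℕ) (k l t : ℤ) (hn' : 1 ≤ n')
    (M₁ : Matrix (Fin n) (Fin n) ℤ)
    (hM₁01 : IsZeroOne M₁) (hM₁diag : ∀ i, M₁ i i = 0)
    (hM₁J : M₁ * allOnes (Fin n) = k • allOnes (Fin n))
    (hJM₁ : allOnes (Fin n) * M₁ = k • allOnes (Fin n))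
    (hM₁2 : M₁ * M₁ = t • (1 : Matrix (Fin n) (Fin n) ℤ) + l • M₁ +
      l • (allOnes (Fin n) - 1 - M₁))
    (M : Matrix (Fin n × Fin n') (Fin n × Fin n') ℤ)
    (hM : M = M₁ ⊗ₖ allOnes (Fin n')) :
    IsZeroOne M ∧ (∀ i, M i i = 0) ∧
    M * allOnes (Fin n × Fin n') = (k * (n' : ℤ)) • allOnes (Fin n × Fin n') ∧
    allOnes (Fin n × Fin n') * M = (k * (n' : ℤ)) • allOnes (Fin n × Fin n') ∧
    ∃ X Y : Matrix (Fin n × Fin n') (Fin n × Fin n') ℤ,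
      IsZeroOne X ∧ IsZeroOne Y ∧ X + Y + 1 = allOnes (Fin n × Fin n') ∧
      M * M = (l * (n' : ℤ)) • X + (t * (n' : ℤ)) • Y +
        (t * (n' : ℤ)) • (1 : Matrix (Fin n × Fin n') (Fin n × Fin n') ℤ) := by
  have hJJ : allOnes (Fin n × Fin n') = allOnes (Fin n) ⊗ₖ allOnes (Fin n') := by
    ext i j
    simp [allOnes, Matrix.kroneckerMap_apply]
  have hJ2 : allOnes (Fin n') * allOnes (Fin n') = (n' : ℤ) • allOnes (Fin n') := by
    ext i j
    simp [allOnes, Matrix.mul_apply]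
  subst hM
  refine ⟨?_, ?_, ?_, ?_, ?_⟩
  · intro i j
    simpa [allOnes, Matrix.kroneckerMap_apply] using hM₁01 i.1 j.1
  · intro i
    simp [Matrix.kroneckerMap_apply, hM₁diag]
  · rw [hJJ, ← Matrix.mul_kronecker_mul, hM₁J, hJ2, Matrix.smul_kronecker,
      Matrix.kronecker_smul, smul_smul]
  · rw [hJJ, ← Matrix.mul_kronecker_mul, hJM₁, hJ2, Matrix.smul_kronecker,
      Matrix.kronecker_smul, smul_smul]
  · refine ⟨Matrix.of fun i j => if i.1 = j.1 then 0 else 1,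
      Matrix.of fun i j => if i.1 = j.1 then (if i.2 = j.2 then 0 else 1) else 0, ?_, ?_, ?_, ?_⟩
    · intro i j
      simp only [Matrix.of_apply]
      split_ifs <;> simp
    · intro i j
      simp only [Matrix.of_apply]
      split_ifs <;> simp
    · ext ⟨a, b⟩ ⟨c, d⟩
      by_cases h : a = c <;> by_cases h' : b = d <;>
        simp [allOnes, Matrix.one_apply, h, h']
    · rw [← Matrix.mul_kronecker_mul, hM₁2, hJ2]
      ext ⟨a, b⟩ ⟨c, d⟩
      simp only [allOnes, Matrix.kroneckerMap_apply, Matrix.add_apply, Matrix.sub_apply,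
        Matrix.smul_apply, Matrix.one_apply, Matrix.of_apply, smul_eq_mul, Prod.mk.injEq]
      by_cases h : a = c <;> by_cases h' : b = d <;> simp [h, h', hM₁diag] <;>
        (left; ring)
end

section
/- Let t ≥ 0 and let A be a (4t+3)×(4t+3) (0,1)-matrix with zero diagonal satisfying A + Aᵀ = J − I (a tournament) and A² = (t+1)·(J − I) − A (a doubly regular tournament). Then A·J = J·A = (2t+1)·J, and A is the adjacency matrix of a directed (4t+3, 2t+1, t+1, t, 0)-Deza graph; explicitly, A² = t·A + (t+1)·(J − I − A) + 0·I, where X = A and Y = J − I − A are (0,1)-matrices with X + Y + I = J. -/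
open Matrix Kronecker

/-- a doubly regular tournament on 4t+3 vertices is a directed
(4t+3, 2t+1, t+1, t, 0)-Deza graph. -/
theorem doubly_regular_tournament_is_deza (t : ℕ)
    (A : Matrix (Fin (4 * t + 3)) (Fin (4 * t + 3)) ℤ)
    (hA01 : IsZeroOne A) (hdiag : ∀ i, A i i = 0)
    (htour : A + Aᵀ = allOnes (Fin (4 * t + 3)) - 1)
    (hA2 : A * A = ((t : ℤ) + 1) • (allOnes (Fin (4 * t + 3)) - 1) - A) :
    A * allOnes (Fin (4 * t + 3)) = (2 * (t : ℤ) + 1) • allOnes (Fin (4 * t + 3)) ∧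
    allOnes (Fin (4 * t + 3)) * A = (2 * (t : ℤ) + 1) • allOnes (Fin (4 * t + 3)) ∧
    IsZeroOne A ∧ IsZeroOne (allOnes (Fin (4 * t + 3)) - 1 - A) ∧
    A + (allOnes (Fin (4 * t + 3)) - 1 - A) + 1 = allOnes (Fin (4 * t + 3)) ∧
    A * A = (t : ℤ) • A + ((t : ℤ) + 1) • (allOnes (Fin (4 * t + 3)) - 1 - A) +
      (0 : ℤ) • (1 : Matrix (Fin (4 * t + 3)) (Fin (4 * t + 3)) ℤ) := by
  have hcomm : A * allOnes (Fin (4 * t + 3)) = allOnes (Fin (4 * t + 3)) * A := by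
    have h : A * (A * A) = (A * A) * A := (mul_assoc A A A).symm
    rw [hA2] at h
    simp only [mul_sub, sub_mul, mul_smul_comm, smul_mul_assoc, mul_one, one_mul, smul_sub] at h
    have h2 : ((t : ℤ) + 1) • (A * allOnes (Fin (4 * t + 3)))
        = ((t : ℤ) + 1) • (allOnes (Fin (4 * t + 3)) * A) := by
      simpa using h
    ext i j
    have h3 := congrFun (congrFun h2 i) j
    simp only [Matrix.smul_apply, smul_eq_mul] at h3
    exact mul_left_cancel₀ (by positivity) h3
  have hrc : ∀ i j, ∑ k, A i k = ∑ k, A k j := by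
    intro i j
    have h := congrFun (congrFun hcomm i) j
    simpa [Matrix.mul_apply, allOnes] using h
  have hsum : ∀ i, ∑ k, A i k + ∑ k, A k i = 4 * t + 2 := by
    intro i
    rw [← Finset.sum_add_distrib]
    have h : ∀ k, A i k + A k i = 1 - (1 : Matrix _ _ ℤ) i k := fun k => by
      simpa [allOnes] using congrFun (congrFun htour i) k
    simp only [h, Finset.sum_sub_distrib, Matrix.one_apply]
    simp
    ring
  have hr : ∀ i, ∑ k, A i k = 2 * t + 1 := by
    intro i
    have := hsum i
    have := hrc i i
    linarith
  have h1 : A * allOnes (Fin (4 * t + 3)) = (2 * (t : ℤ) + 1) • allOnes (Fin (4 * t + 3)) := by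
    ext i j
    simpa [Matrix.mul_apply, allOnes] using hr i
  refine ⟨h1, hcomm ▸ h1, hA01, ?_, by abel, ?_⟩
  · rw [← htour]
    intro i j
    simpa using hA01 j i
  · rw [hA2]
    module
end

section
/- Let u ≥ 1 and suppose there exists a skew-type Hadamard matrix of order 4u, i.e., a 4u×4u matrix H with entries ±1 satisfying H·Hᵀ = 4u·I and H + Hᵀ = 2·I. Then there exists a directed Deza graph with parameters (8u, 4u−1, 4u−1, 2u−1, 0); that is, there exists an 8u×8u (0,1)-matrix M with zero diagonal such that M + Mᵀ is a (0,1)-matrix, M·J = J·M = (4u−1)·J, and M² = (2u−1)·X + (4u−1)·Y for some (0,1)-matrices X, Y with X + Y + I = J. -/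
open Matrix Kronecker

def dzS (s : Bool) : ℤ := if s then 1 else -1

def dzM {n : ℕ} (H : Matrix (Fin n) (Fin n) ℤ) : Matrix (Fin n × Bool) (Fin n × Bool) ℤ :=
  Matrix.of fun p q => if p.1 = q.1 then 0 else if H p.1 q.1 = dzS p.2 * dzS q.2 then 1 else 0

def dzX (n : ℕ) : Matrix (Fin n × Bool) (Fin n × Bool) ℤ :=
  Matrix.of fun p q => if p.1 = q.1 then 0 else 1

def dzY (n : ℕ) : Matrix (Fin n × Bool) (Fin n × Bool) ℤ :=
  Matrix.of fun p q => if p.1 = q.1 then (if p.2 = q.2 then 0 else 1) else 0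

lemma dz_key (u : ℕ) (hu : 1 ≤ u)
    (H : Matrix (Fin (4 * u)) (Fin (4 * u)) ℤ)
    (hH : ∀ i j, H i j = 1 ∨ H i j = -1)
    (hHH : H * Hᵀ = (4 * (u : ℤ)) • (1 : Matrix (Fin (4 * u)) (Fin (4 * u)) ℤ))
    (hskew : H + Hᵀ = 2 • (1 : Matrix (Fin (4 * u)) (Fin (4 * u)) ℤ)) :
    ∃ M X Y : Matrix (Fin (4 * u) × Bool) (Fin (4 * u) × Bool) ℤ,
      IsZeroOne M ∧ (∀ i, M i i = 0) ∧ IsZeroOne (M + Mᵀ) ∧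
      M * allOnes _ = (4 * (u : ℤ) - 1) • allOnes _ ∧
      allOnes _ * M = (4 * (u : ℤ) - 1) • allOnes _ ∧
      IsZeroOne X ∧ IsZeroOne Y ∧ X + Y + 1 = allOnes _ ∧
      M * M = (2 * (u : ℤ) - 1) • X + (4 * (u : ℤ) - 1) • Y := by
  have hsk : ∀ i j, H i j + H j i = 2 * (if i = j then 1 else 0) := by
    intro i j
    have := congrFun (congrFun hskew i) j
    simpa [Matrix.one_apply] using this
  have hd : ∀ i, H i i = 1 := fun i => by
    have := hsk i i
    simp at this; omega
  have hSS : ∀ i j, ∑ k, (H i k - if i = k then 1 else 0) * (H k j - if k = j then 1 else 0)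
      = (1 - 4 * (u : ℤ)) * (if i = j then 1 else 0) := by
    have hT : Hᵀ = 2 • 1 - H := by rw [← hskew]; abel
    have h1 : (H - 1) * (H - 1) = (1 - 4 * (u : ℤ)) • (1 : Matrix (Fin (4 * u)) (Fin (4 * u)) ℤ) := by
      rw [hT, mul_sub] at hHH
      rw [sub_smul, ← hHH]
      simp [mul_sub, sub_mul, two_smul, mul_add]
      abel
    intro i j
    have := congrFun (congrFun h1 i) j
    simpa [Matrix.mul_apply, Matrix.one_apply] using this
  have hDD : ∀ i j : Fin (4 * u), ∑ k, (1 - if i = k then 1 else 0) * (1 - if k = j then 1 else 0)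
      = (4 * (u : ℤ) - 2) + (if i = j then 1 else 0) := by
    intro i j
    simp [mul_sub, sub_mul, Finset.sum_sub_distrib]
    ring
  have h2 : ∀ i s j t, 2 * dzM H (i, s) (j, t)
      = dzS s * dzS t * (H i j - if i = j then 1 else 0) + (1 - if i = j then 1 else 0) := by
    intro i s j t
    by_cases hij : i = j
    · subst hij; simp [dzM, hd]
    · rcases hH i j with h | h <;> cases s <;> cases t <;> simp [dzM, hij, h, dzS]
  refine ⟨dzM H, dzX _, dzY _, ?_, ?_, ?_, ?_, ?_, ?_, ?_, ?_, ?_⟩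
  · rintro ⟨i, s⟩ ⟨j, t⟩
    simp only [dzM, Matrix.of_apply]; split_ifs <;> simp
  · rintro ⟨i, s⟩
    simp [dzM]
  · rintro ⟨i, s⟩ ⟨j, t⟩
    have a := h2 i s j t
    have b := h2 j t i s
    have c := hsk i j
    rw [Matrix.add_apply, Matrix.transpose_apply]
    have e : H j i = 2 * (if i = j then 1 else 0) - H i j := by linarith
    rw [e] at b
    by_cases hij : i = j
    · subst hij; left; simp [dzM]
    · right
      simp only [hij, Ne.symm hij, if_false] at a b
      linarith
  · ext ⟨i, s⟩ ⟨j, t⟩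
    have : 2 * ∑ k, ∑ r, dzM H (i, s) (k, r) = 2 * (4 * (u : ℤ) - 1) := by
      simp only [Finset.mul_sum, h2]
      simp [dzS, Finset.sum_add_distrib]
      ring
    simp [Matrix.mul_apply, allOnes, Fintype.sum_prod_type] at this ⊢
    linarith
  · ext ⟨i, s⟩ ⟨j, t⟩
    have : 2 * ∑ k, ∑ r, dzM H (k, r) (j, t) = 2 * (4 * (u : ℤ) - 1) := by
      simp only [Finset.mul_sum, h2]
      simp [dzS, Finset.sum_add_distrib]
      ring
    simp [Matrix.mul_apply, allOnes, Fintype.sum_prod_type] at this ⊢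
    linarith
  · rintro ⟨i, s⟩ ⟨j, t⟩
    simp only [dzX, Matrix.of_apply]; split_ifs <;> simp
  · rintro ⟨i, s⟩ ⟨j, t⟩
    simp only [dzY, Matrix.of_apply]; split_ifs <;> simp
  · ext ⟨i, s⟩ ⟨j, t⟩
    simp only [dzX, dzY, allOnes, Matrix.add_apply, Matrix.one_apply, Matrix.of_apply, Prod.mk.injEq]
    by_cases hij : i = j <;> by_cases hst : s = t <;> simp [hij, hst]
  · ext ⟨i, s⟩ ⟨j, t⟩
    have key : 4 * (dzM H * dzM H) (i, s) (j, t)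
        = 2 * (dzS s * dzS t * ((1 - 4 * (u : ℤ)) * (if i = j then 1 else 0))
          + ((4 * (u : ℤ) - 2) + (if i = j then 1 else 0))) := by
      rw [← hSS, ← hDD, Matrix.mul_apply, Fintype.sum_prod_type, Finset.mul_sum, Finset.mul_sum,
        ← Finset.sum_add_distrib, Finset.mul_sum]
      refine Finset.sum_congr rfl fun k _ => ?_
      have a1 := h2 i s k true
      have a2 := h2 i s k false
      have b1 := h2 k true j t
      have b2 := h2 k false j t
      rw [Fintype.sum_bool]
      calc _ = (2 * dzM H (i, s) (k, true)) * (2 * dzM H (k, true) (j, t))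
            + (2 * dzM H (i, s) (k, false)) * (2 * dzM H (k, false) (j, t)) := by ring
        _ = _ := by
          rw [a1, a2, b1, b2]
          simp only [dzS, if_true, Bool.false_eq_true, if_false]
          ring
    simp only [Matrix.add_apply, Matrix.smul_apply, dzX, dzY, Matrix.of_apply, smul_eq_mul]
    by_cases hij : i = j
    · subst hij
      cases s <;> cases t <;> simp [dzS] at key ⊢ <;> linarith
    · simp only [hij, if_false] at key ⊢
      linarith

/-- a skew-type Hadamard matrix of order 4u yields an asymmetric directed
Deza graph with parameters (8u, 4u−1, 4u−1, 2u−1, 0). -/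
theorem deza_digraph_from_skew_hadamard (u : ℕ) (hu : 1 ≤ u)
    (H : Matrix (Fin (4 * u)) (Fin (4 * u)) ℤ)
    (hH : ∀ i j, H i j = 1 ∨ H i j = -1)
    (hHH : H * Hᵀ = (4 * (u : ℤ)) • (1 : Matrix (Fin (4 * u)) (Fin (4 * u)) ℤ))
    (hskew : H + Hᵀ = 2 • (1 : Matrix (Fin (4 * u)) (Fin (4 * u)) ℤ)) :
    ∃ M X Y : Matrix (Fin (8 * u)) (Fin (8 * u)) ℤ,
      IsZeroOne M ∧ (∀ i, M i i = 0) ∧ IsZeroOne (M + Mᵀ) ∧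
      M * allOnes (Fin (8 * u)) = (4 * (u : ℤ) - 1) • allOnes (Fin (8 * u)) ∧
      allOnes (Fin (8 * u)) * M = (4 * (u : ℤ) - 1) • allOnes (Fin (8 * u)) ∧
      IsZeroOne X ∧ IsZeroOne Y ∧ X + Y + 1 = allOnes (Fin (8 * u)) ∧
      M * M = (2 * (u : ℤ) - 1) • X + (4 * (u : ℤ) - 1) • Y := by
  obtain ⟨M, X, Y, h1, h2, h3, h4, h5, h6, h7, h8, h9⟩ := dz_key u hu H hH hHH hskew
  have e : Fin (8 * u) ≃ Fin (4 * u) × Bool := Fintype.equivOfCardEq (by simp; ring)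
  have hJ : allOnes (Fin (8 * u)) = (allOnes (Fin (4 * u) × Bool)).submatrix e e := rfl
  refine ⟨M.submatrix e e, X.submatrix e e, Y.submatrix e e, fun i j => h1 _ _, fun i => h2 _,
    fun i j => h3 _ _, ?_, ?_, fun i j => h6 _ _, fun i j => h7 _ _, ?_, ?_⟩
  · rw [hJ, Matrix.submatrix_mul_equiv, h4]; rfl
  · rw [hJ, Matrix.submatrix_mul_equiv, h5]; rfl
  · rw [hJ, ← h8, ← Matrix.submatrix_one_equiv e]; rfl
  · rw [Matrix.submatrix_mul_equiv, h9]; rfl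
end

section
/- Let n be even and suppose there exists a Hadamard matrix of order n (an n×n (±1)-matrix H with H·Hᵀ = n·I). Then there exists a twin Deza graph with parameters ((2n−1)n, (n−1)n, n(n−1)/2, n(n−2)/2): there exist (2n−1)n×(2n−1)n (0,1)-matrices A and B with A + B = (J_{2n−1} − I_{2n−1}) ⊗ J_n (in particular A and B are disjoint) such that each of A and B is the adjacency matrix of a Deza graph with parameters ((2n−1)n, (n−1)n, n(n−1)/2, n(n−2)/2). -/
open Matrix Kronecker

/-- `M` is the adjacency matrix of a Deza graph with parameters (|ι|, k, b, a):
a symmetric (0,1)-matrix with zero diagonal, row sums k, and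
M² = a·X + b·Y + k·I for some (0,1)-matrices X, Y with X + Y + I = J. -/
def IsDezaAdj {ι : Type*} [Fintype ι] [DecidableEq ι]
    (M : Matrix ι ι ℤ) (k b a : ℤ) : Prop :=
  IsZeroOne M ∧ Mᵀ = M ∧ (∀ i, M i i = 0) ∧
  M * allOnes ι = k • allOnes ι ∧
  ∃ X Y : Matrix ι ι ℤ, IsZeroOne X ∧ IsZeroOne Y ∧ X + Y + 1 = allOnes ι ∧
    M * M = a • X + b • Y + k • (1 : Matrix ι ι ℤ)

lemma deza_core {ι κ α : Type*} [Fintype ι] [DecidableEq ι] [Fintype κ] [DecidableEq κ]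
    [Fintype α] [DecidableEq α] (n q : ℤ) (hnq : n = 2 * q)
    (hι : (Fintype.card ι : ℤ) = 2 * n - 1) (hα : (Fintype.card α : ℤ) = n)
    (c : ι → ι → κ) (z : κ) (csymm : ∀ i j, c i j = c j i) (cz : ∀ i j, c i j = z ↔ i = j)
    (csum : ∀ (i : ι) (f : κ → ℤ), ∑ k, f (c i k) = 2 * ∑ e, f e - f z)
    (cuniq : ∀ i j, i ≠ j → ∃! k, c i k = c k j)
    (G : κ → α → ℤ) (Gz : ∀ x, G z x = 0) (Gpm : ∀ e, e ≠ z → ∀ x, G e x = 1 ∨ G e x = -1)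
    (Gsum : ∀ e, ∑ x, G e x = 0)
    (Gorth : ∀ e f, ∑ x, G e x * G f x = if e = f ∧ e ≠ z then n else 0)
    (Gcol : ∀ x y, ∑ e, G e x * G e y = (if x = y then n else 0) - 1)
    (ε : ℤ) (hε : ε = 1 ∨ ε = -1) (M : Matrix (ι × α) (ι × α) ℤ)
    (hM : ∀ u v, 2 * M u v = (if u.1 = v.1 then 0 else 1)
      + ε * (G (c u.1 v.1) u.2 * G (c u.1 v.1) v.2)) :
    IsDezaAdj M ((n - 1) * n) (n * (n - 1) / 2) (n * (n - 2) / 2) := by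
  have hb : n * (n - 1) / 2 = q * (n - 1) := by
    rw [hnq, mul_assoc]; exact Int.mul_ediv_cancel_left _ (by norm_num)
  have ha : n * (n - 2) / 2 = q * (n - 2) := by
    rw [hnq, mul_assoc]; exact Int.mul_ediv_cancel_left _ (by norm_num)
  rw [hb, ha]
  have hεε : ε * ε = 1 := by rcases hε with rfl | rfl <;> norm_num
  have Gpm2 : ∀ e, e ≠ z → ∀ x y, G e x * G e y = 1 ∨ G e x * G e y = -1 := by
    intro e he x y
    rcases Gpm e he x with h | h <;> rcases Gpm e he y with h' | h' <;> simp [h, h']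
  have Ksum : ∀ i : ι, ∑ k, (if i = k then (0:ℤ) else 1) = 2 * n - 2 := by
    intro i
    have : ∀ k, (if i = k then (0:ℤ) else 1) = 1 - (if i = k then 1 else 0) := by
      intro k; split_ifs <;> rfl
    simp_rw [this]
    rw [Finset.sum_sub_distrib]
    simp [hι]; ring
  have Ksum2 : ∀ i j : ι, i ≠ j →
      ∑ k, (if i = k then (0:ℤ) else 1) * (if k = j then 0 else 1) = 2 * n - 3 := by
    intro i j hij
    have : ∀ k, (if i = k then (0:ℤ) else 1) * (if k = j then 0 else 1)
        = 1 - (if i = k then 1 else 0) - (if k = j then 1 else 0) := by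
      intro k
      by_cases h1 : i = k <;> by_cases h2 : k = j
      · exact absurd (h1.trans h2) hij
      · simp [h1, h2]
      · subst h2; simp [h1]
      · simp [h1, h2]
    simp_rw [this]
    rw [Finset.sum_sub_distrib, Finset.sum_sub_distrib]
    simp [hι]; ring
  have hMM : ∀ u v, 4 * (M * M) u v =
      n * ∑ k, (if u.1 = k then (0:ℤ) else 1) * (if k = v.1 then 0 else 1)
      + n * ∑ k, if c u.1 k = c k v.1 then G (c u.1 k) u.2 * G (c u.1 k) v.2 else 0 := by
    rintro ⟨i, x⟩ ⟨j, y⟩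
    rw [Matrix.mul_apply, Fintype.sum_prod_type, Finset.mul_sum, Finset.mul_sum, Finset.mul_sum,
      ← Finset.sum_add_distrib]
    refine Finset.sum_congr rfl fun k _ => ?_
    rw [Finset.mul_sum]
    have : ∀ t, 4 * (M (i, x) (k, t) * M (k, t) (j, y)) =
        (if i = k then (0:ℤ) else 1) * (if k = j then 0 else 1)
        + ((if i = k then (0:ℤ) else 1) * ε * G (c k j) y) * G (c k j) t
        + ((if k = j then (0:ℤ) else 1) * ε * G (c i k) x) * G (c i k) t
        + (G (c i k) x * G (c k j) y) * (G (c i k) t * G (c k j) t) := by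
      intro t
      have h1 := hM (i, x) (k, t)
      have h2 := hM (k, t) (j, y)
      simp only at h1 h2
      calc _ = (2 * M (i, x) (k, t)) * (2 * M (k, t) (j, y)) := by ring
        _ = _ := by
          rw [h1, h2]
          linear_combination
            (G (c i k) x * G (c k j) y) * (G (c i k) t * G (c k j) t) * hεε
    simp_rw [this]
    rw [Finset.sum_add_distrib, Finset.sum_add_distrib, Finset.sum_add_distrib,
      Finset.sum_const, ← Finset.mul_sum, ← Finset.mul_sum, ← Finset.mul_sum, Gsum, Gsum, Gorth]
    simp only [Finset.card_univ, nsmul_eq_mul, hα]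
    by_cases h : c i k = c k j
    · by_cases h' : c i k = z
      · simp [h', Gz]
      · rw [← h]; simp [h']; ring
    · simp [h]
  have hdiag : ∀ i x y, (M * M) (i, x) (i, y) = q * (n - 2) + if x = y then q * n else 0 := by
    intro i x y
    have h := hMM (i, x) (i, y)
    have e1 : ∀ k, (if i = k then (0:ℤ) else 1) * (if k = i then 0 else 1)
        = if i = k then (0:ℤ) else 1 := by
      intro k
      by_cases h1 : i = k
      · simp [h1]
      · simp [h1, Ne.symm h1]
    have e2 : ∀ k, (if c i k = c k i then G (c i k) x * G (c i k) y else 0)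
        = G (c i k) x * G (c i k) y := by
      intro k; rw [if_pos (csymm i k)]
    simp only [e1, e2] at h
    rw [Ksum, csum i (fun e => G e x * G e y), Gcol, Gz] at h
    split_ifs at h ⊢ <;> subst hnq <;> linarith
  have hoff : ∀ i j x y, i ≠ j → (M * M) (i, x) (j, y) = q * (n - 2) ∨
      (M * M) (i, x) (j, y) = q * (n - 1) := by
    intro i j x y hij
    have h := hMM (i, x) (j, y)
    simp only at h
    obtain ⟨k, hk, hk'⟩ := cuniq i j hij
    simp only at hk'
    rw [Ksum2 i j hij, Finset.sum_eq_single k, if_pos hk] at h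
    · have hz : c i k ≠ z := by
        intro hz
        have h1 := (cz _ _).1 hz
        have h2 := (cz _ _).1 (hk ▸ hz)
        exact hij (h1.trans h2)
      rcases Gpm2 _ hz x y with h' | h' <;> rw [h'] at h <;> subst hnq
      · right; linarith
      · left; linarith
    · intro b _ hb
      rw [if_neg fun h => hb (hk' _ h)]
    · simp
  refine ⟨?_, ?_, ?_, ?_, ?_⟩
  · rintro ⟨i, x⟩ ⟨j, y⟩
    have h := hM (i, x) (j, y)
    simp only at h
    by_cases hij : i = j
    · rw [(cz i j).2 hij, Gz, if_pos hij] at h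
      left; linarith
    · rw [if_neg hij] at h
      rcases Gpm2 (c i j) (fun h => hij ((cz _ _).1 h)) x y with h' | h' <;> rw [h'] at h <;>
        rcases hε with rfl | rfl <;> omega
  · ext u v
    have h1 := hM u v
    have h2 := hM v u
    rw [csymm v.1 u.1] at h2
    simp only [eq_comm (a := v.1)] at h2
    rw [Matrix.transpose_apply]
    linarith
  · intro u
    have h1 := hM u u
    rw [(cz _ _).2 rfl, Gz] at h1
    simp at h1
    exact h1
  · ext ⟨i, x⟩ v
    simp only [Matrix.mul_apply, allOnes, Matrix.of_apply, mul_one, Matrix.smul_apply,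
      smul_eq_mul]
    have : 2 * ∑ u, M (i, x) u = 2 * ((n - 1) * n) := by
      rw [Finset.mul_sum]
      simp_rw [hM]
      rw [Fintype.sum_prod_type]
      have : ∀ k, ∑ t : α, ((if i = k then (0:ℤ) else 1) + ε * (G (c i k) x * G (c i k) t))
          = n * if i = k then (0:ℤ) else 1 := by
        intro k
        simp_rw [← mul_assoc]
        rw [Finset.sum_add_distrib, ← Finset.mul_sum, Gsum]
        simp only [Finset.sum_const, Finset.card_univ, nsmul_eq_mul, hα]
        ring
      simp_rw [this]
      rw [← Finset.mul_sum, Ksum]; ring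
    linarith
  · have key : ∀ u v, u ≠ v → (M * M) u v = q * (n - 2) ∨ (M * M) u v = q * (n - 1) := by
      rintro ⟨i, x⟩ ⟨j, y⟩ huv
      by_cases hij : i = j
      · subst hij
        left
        rw [hdiag, if_neg (fun h => huv (by rw [h])), add_zero]
      · exact hoff i j x y hij
    have key2 : ∀ u, (M * M) u u = (n - 1) * n := by
      rintro ⟨i, x⟩
      rw [hdiag, if_pos rfl]; subst hnq; ring
    refine ⟨Matrix.of fun u v => if u = v then 0 else if (M * M) u v = q * (n - 1) then 0 else 1,
      Matrix.of fun u v => if u = v then 0 else if (M * M) u v = q * (n - 1) then 1 else 0,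
      ?_, ?_, ?_, ?_⟩
    · intro u v; simp only [Matrix.of_apply]; split_ifs <;> simp
    · intro u v; simp only [Matrix.of_apply]; split_ifs <;> simp
    · ext u v
      simp only [Matrix.add_apply, Matrix.of_apply, Matrix.one_apply, allOnes]
      split_ifs <;> simp
    · ext u v
      simp only [Matrix.add_apply, Matrix.of_apply, Matrix.one_apply, Matrix.smul_apply,
        smul_eq_mul]
      by_cases huv : u = v
      · subst huv; simp [key2]
      · by_cases h : (M * M) u v = q * (n - 1)
        · simp [huv, h]
        · have := (key u v huv).resolve_right h
          rw [if_neg huv, if_neg huv, if_neg huv, if_neg h, if_neg h, this]; ring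

lemma sum_min (p : ℕ) (F : ℕ → ℤ) :
    ∑ d ∈ Finset.range (2 * p + 1), F (min d (2 * p + 1 - d))
      = 2 * ∑ e ∈ Finset.range (p + 1), F e - F 0 := by
  rw [Finset.sum_range_succ', Finset.sum_range_succ' F, two_mul p, Finset.sum_range_add]
  have h1 : ∑ x ∈ Finset.range p, F (min (x + 1) (p + p + 1 - (x + 1)))
      = ∑ x ∈ Finset.range p, F (x + 1) := by
    refine Finset.sum_congr rfl fun x hx => ?_
    rw [Finset.mem_range] at hx
    congr 1; omega
  have h2 : ∑ x ∈ Finset.range p, F (min (p + x + 1) (p + p + 1 - (p + x + 1)))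
      = ∑ x ∈ Finset.range p, F (x + 1) := by
    rw [← Finset.sum_range_reflect (fun x => F (x + 1))]
    refine Finset.sum_congr rfl fun x hx => ?_
    rw [Finset.mem_range] at hx
    congr 1; omega
  rw [h1, h2]; simp; ring

lemma coloring (p : ℕ) : ∃ c : ZMod (2 * p + 1) → ZMod (2 * p + 1) → Fin (p + 1),
    (∀ i j, c i j = c j i) ∧ (∀ i j, c i j = 0 ↔ i = j) ∧
    (∀ (i) (f : Fin (p + 1) → ℤ), ∑ k, f (c i k) = 2 * ∑ e, f e - f 0) ∧
    (∀ i j, i ≠ j → ∃! k, c i k = c k j) := by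
  let g : ZMod (2 * p + 1) → Fin (p + 1) := fun d => Fin.ofNat (p + 1) (min d.val (2 * p + 1 - d.val))
  have gval : ∀ d, (g d).val = min d.val (2 * p + 1 - d.val) := by
    intro d
    have := ZMod.val_lt d
    simp only [g, Fin.val_ofNat]
    exact Nat.mod_eq_of_lt (by omega)
  have gneg : ∀ d, g (-d) = g d := by
    intro d
    apply Fin.ext
    rw [gval, gval, ZMod.neg_val]
    have := ZMod.val_lt d
    split_ifs with h
    · simp [h]
    · omega
  have geq : ∀ d d', g d = g d' → d = d' ∨ d = -d' := by
    intro d d' h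
    have h := congrArg Fin.val h
    rw [gval, gval] at h
    have h1 := ZMod.val_lt d
    have h2 := ZMod.val_lt d'
    by_cases hd : d.val = d'.val
    · left; exact ZMod.val_injective _ hd
    · right
      apply ZMod.val_injective
      rw [ZMod.neg_val]
      split_ifs with h0
      · exfalso
        have hz : d'.val = 0 := by rw [h0, ZMod.val_zero]
        omega
      · omega
  have g0 : g 0 = 0 := by apply Fin.ext; rw [gval]; simp
  have two : (2 : ZMod (2 * p + 1)) * (p + 1) = 1 := by
    have := ZMod.natCast_self (2 * p + 1)
    push_cast at this
    linear_combination this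
  refine ⟨fun i j => g (i - j), ?_, ?_, ?_, ?_⟩
  · intro i j; simp only; rw [← gneg, neg_sub]
  · intro i j
    constructor
    · intro h
      simp only [← g0] at h
      rcases geq _ _ h with h | h
      · exact sub_eq_zero.1 h
      · rw [neg_zero] at h; exact sub_eq_zero.1 h
    · rintro rfl; simp [g0]
  · intro i f
    simp only
    have hs := (Equiv.subLeft i).sum_comp (fun d => f (g d))
    simp only [Equiv.subLeft_apply] at hs
    rw [hs]
    have h := sum_min p (fun e => f (Fin.ofNat (p + 1) e))
    rw [← Fin.sum_univ_eq_sum_range, ← Fin.sum_univ_eq_sum_range (fun e => f (Fin.ofNat (p + 1) e))] at h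
    have e : ∀ e : Fin (p + 1), Fin.ofNat (p + 1) e.val = e := by intro e; simp
    simp only [e] at h
    exact h
  · intro i j hij
    refine ⟨(p + 1) * (i + j), ?_, ?_⟩
    · simp only
      congr 1
      linear_combination (-(i + j)) * two
    · intro k hk
      rcases geq _ _ hk with h | h
      · linear_combination (-k) * two - (p + 1 : ZMod (2 * p + 1)) * h
      · exact absurd (by linear_combination h) hij

/-- a Hadamard matrix of even order n yields a twin Deza graph with
parameters ((2n−1)n, (n−1)n, n(n−1)/2, n(n−2)/2). -/
theorem twin_deza_from_hadamard (n : ℕ) (hn : Even n)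
    (H : Matrix (Fin n) (Fin n) ℤ)
    (hH : ∀ i j, H i j = 1 ∨ H i j = -1)
    (hHH : H * Hᵀ = (n : ℤ) • (1 : Matrix (Fin n) (Fin n) ℤ)) :
    ∃ A B : Matrix (Fin (2 * n - 1) × Fin n) (Fin (2 * n - 1) × Fin n) ℤ,
      A + B = (allOnes (Fin (2 * n - 1)) - 1) ⊗ₖ allOnes (Fin n) ∧
      IsDezaAdj A (((n : ℤ) - 1) * n) ((n : ℤ) * ((n : ℤ) - 1) / 2)
        ((n : ℤ) * ((n : ℤ) - 2) / 2) ∧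
      IsDezaAdj B (((n : ℤ) - 1) * n) ((n : ℤ) * ((n : ℤ) - 1) / 2)
        ((n : ℤ) * ((n : ℤ) - 2) / 2) := by
  rcases Nat.eq_zero_or_pos n with h0 | hpos
  · subst h0
    have hI : IsDezaAdj (0 : Matrix (Fin (2 * 0 - 1) × Fin 0) (Fin (2 * 0 - 1) × Fin 0) ℤ)
        ((((0 : ℕ) : ℤ) - 1) * (0 : ℕ)) (((0 : ℕ) : ℤ) * (((0 : ℕ) : ℤ) - 1) / 2)
        (((0 : ℕ) : ℤ) * (((0 : ℕ) : ℤ) - 2) / 2) := by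
      refine ⟨fun u => u.2.elim0, ?_, fun u => u.2.elim0, ?_, 0, 0, fun u => u.2.elim0,
        fun u => u.2.elim0, ?_, ?_⟩ <;> ext u <;> exact u.2.elim0
    exact ⟨0, 0, by ext u; exact u.2.elim0, hI, hI⟩
  obtain ⟨p, rfl⟩ : ∃ p, n = p + 1 := ⟨n - 1, by omega⟩
  obtain ⟨q, hq⟩ := hn
  have hHT : Hᵀ * H = ((p + 1 : ℕ) : ℤ) • (1 : Matrix (Fin (p + 1)) (Fin (p + 1)) ℤ) := by
    have hdet : H.det ≠ 0 := by
      intro h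
      have := congrArg Matrix.det hHH
      rw [Matrix.det_mul, h, Matrix.det_smul, Matrix.det_one, zero_mul, mul_one] at this
      exact pow_ne_zero _ (by positivity) this.symm
    have h1 : H * (Hᵀ * H - ((p + 1 : ℕ) : ℤ) • 1) = 0 := by
      rw [Matrix.mul_sub, ← Matrix.mul_assoc, hHH, Matrix.smul_mul, Matrix.one_mul,
        Matrix.mul_smul, Matrix.mul_one, sub_self]
    have h2 : H.det • (Hᵀ * H - ((p + 1 : ℕ) : ℤ) • 1) = 0 := by
      have := congrArg (fun X => H.adjugate * X) h1
      simp only [← Matrix.mul_assoc, Matrix.adjugate_mul, Matrix.mul_zero] at this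
      rw [Matrix.smul_mul, Matrix.one_mul] at this
      rw [Matrix.mul_sub] at h1
      exact this
    exact sub_eq_zero.1 ((smul_eq_zero.1 h2).resolve_left hdet)
  have hsq : ∀ i j, H i j * H i j = 1 := by
    intro i j; rcases hH i j with h | h <;> rw [h] <;> norm_num
  have horth : ∀ e f, ∑ x, H e x * H f x = if e = f then ((p + 1 : ℕ) : ℤ) else 0 := by
    intro e f
    have := congrFun (congrFun hHH e) f
    rw [Matrix.mul_apply] at this
    simpa [Matrix.one_apply] using this
  have hcol : ∀ x y, ∑ e, H e x * H e y = if x = y then ((p + 1 : ℕ) : ℤ) else 0 := by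
    intro x y
    have := congrFun (congrFun hHT x) y
    rw [Matrix.mul_apply] at this
    simpa [Matrix.one_apply] using this
  let G : Fin (p + 1) → Fin (p + 1) → ℤ := fun e x => if e = 0 then 0 else H e x * H 0 x
  have Gz : ∀ x, G 0 x = 0 := fun x => if_pos rfl
  have Gpm : ∀ e, e ≠ 0 → ∀ x, G e x = 1 ∨ G e x = -1 := by
    intro e he x
    simp only [G, if_neg he]
    rcases hH e x with h | h <;> rcases hH 0 x with h' | h' <;> simp [h, h']
  have Gsum : ∀ e, ∑ x, G e x = 0 := by
    intro e
    by_cases he : e = 0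
    · simp [G, he]
    · simp only [G, if_neg he]; rw [horth, if_neg he]
  have Gorth : ∀ e f, ∑ x, G e x * G f x = if e = f ∧ e ≠ 0 then ((p + 1 : ℕ) : ℤ) else 0 := by
    intro e f
    by_cases he : e = 0
    · simp [G, he]
    by_cases hf : f = 0
    · rw [if_neg (by rintro ⟨h, h'⟩; exact h' (h.trans hf))]; simp [G, hf]
    simp only [G, if_neg he, if_neg hf]
    have : ∀ x, H e x * H 0 x * (H f x * H 0 x) = H e x * H f x := by
      intro x; linear_combination (H e x * H f x) * hsq 0 x
    simp_rw [this]
    rw [horth]; simp [he]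
  have Gcol : ∀ x y, ∑ e, G e x * G e y = (if x = y then ((p + 1 : ℕ) : ℤ) else 0) - 1 := by
    intro x y
    have h1 : ∀ e, G e x * G e y =
        (H e x * H e y) * (H 0 x * H 0 y) - if e = 0 then 1 else 0 := by
      intro e
      by_cases he : e = 0
      · subst he; simp only [G, if_true]
        linear_combination (-(H 0 y * H 0 y)) * hsq 0 x - hsq 0 y
      · simp only [G, if_neg he]; ring
    simp_rw [h1]
    rw [Finset.sum_sub_distrib, ← Finset.sum_mul, hcol]
    by_cases hxy : x = y
    · subst hxy; simp [hsq]
    · simp [hxy]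
  obtain ⟨c, csymm, cz, csum, cuniq⟩ : ∃ c : Fin (2 * (p + 1) - 1) → Fin (2 * (p + 1) - 1) →
      Fin (p + 1), (∀ i j, c i j = c j i) ∧ (∀ i j, c i j = 0 ↔ i = j) ∧
      (∀ (i) (f : Fin (p + 1) → ℤ), ∑ k, f (c i k) = 2 * ∑ e, f e - f 0) ∧
      (∀ i j, i ≠ j → ∃! k, c i k = c k j) := coloring p
  have hdich : ∀ i j x y, i ≠ j → G (c i j) x * G (c i j) y = 1 ∨
      G (c i j) x * G (c i j) y = -1 := by
    intro i j x y hij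
    have hne : c i j ≠ 0 := fun h => hij ((cz i j).1 h)
    rcases Gpm _ hne x with h | h <;> rcases Gpm _ hne y with h' | h' <;> simp [h, h']
  let N : ℤ → Matrix (Fin (2 * (p + 1) - 1) × Fin (p + 1)) (Fin (2 * (p + 1) - 1) × Fin (p + 1)) ℤ :=
    fun ε => Matrix.of fun u v => if u.1 = v.1 then 0 else
      if G (c u.1 v.1) u.2 * G (c u.1 v.1) v.2 = ε then 1 else 0
  have hN : ∀ ε : ℤ, (ε = 1 ∨ ε = -1) → ∀ u v, 2 * N ε u v = (if u.1 = v.1 then 0 else 1)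
      + ε * (G (c u.1 v.1) u.2 * G (c u.1 v.1) v.2) := by
    intro ε hε u v
    simp only [N, Matrix.of_apply]
    by_cases huv : u.1 = v.1
    · rw [if_pos huv, if_pos huv, (cz _ _).2 huv, Gz]; simp
    · rw [if_neg huv, if_neg huv]
      rcases hdich _ _ u.2 v.2 huv with h | h <;> rw [h] <;> rcases hε with rfl | rfl <;> norm_num
  have main : ∀ ε : ℤ, (ε = 1 ∨ ε = -1) → _ := fun ε hε =>
    deza_core ((p + 1 : ℕ) : ℤ) q (by rw [hq]; push_cast; ring)
      (by rw [Fintype.card_fin]; omega) (by rw [Fintype.card_fin])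
      c 0 csymm cz csum cuniq G Gz Gpm Gsum Gorth Gcol ε hε (N ε) (hN ε hε)
  refine ⟨N 1, N (-1), ?_, main 1 (Or.inl rfl), main (-1) (Or.inr rfl)⟩
  ext u v
  have h1 := hN 1 (Or.inl rfl) u v
  have h2 := hN (-1) (Or.inr rfl) u v
  have h3 : ((allOnes (Fin (2 * (p + 1) - 1)) - 1) ⊗ₖ allOnes (Fin (p + 1))) u v
      = if u.1 = v.1 then 0 else 1 := by
    simp only [Matrix.kroneckerMap_apply, Matrix.sub_apply, allOnes, Matrix.of_apply,
      Matrix.one_apply]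
    split_ifs <;> simp
  rw [h3, Matrix.add_apply]
  linarith
end

section
/- Let n be even and suppose there exists a Hadamard matrix of order n (an n×n (±1)-matrix H with H·Hᵀ = n·I). Then there exists a Siamese twin Deza reflexive graph with parameters ((2n−1)n, n², n(n+1)/2, n²/2) sharing the entries of N = I_{2n−1} ⊗ J_n: there exist (2n−1)n×(2n−1)n (0,1)-matrices K and L with K + L = (J_{2n−1} − I_{2n−1}) ⊗ J_n (in particular N, K, L are pairwise disjoint) such that each of N + K and N + L is the adjacency matrix of a Deza reflexive graph with parameters ((2n−1)n, n², n(n+1)/2, n²/2). -/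
open Matrix Kronecker

/-- `M` is the adjacency matrix of a Deza reflexive graph with parameters (|ι|, k, b, a):
a symmetric (0,1)-matrix with all-ones diagonal, row sums k, and
M² = a·X + b·Y + k·I for some (0,1)-matrices X, Y with X + Y + I = J. -/
def IsDezaReflexiveAdj {ι : Type*} [Fintype ι] [DecidableEq ι]
    (M : Matrix ι ι ℤ) (k b a : ℤ) : Prop :=
  IsZeroOne M ∧ Mᵀ = M ∧ (∀ i, M i i = 1) ∧
  M * allOnes ι = k • allOnes ι ∧
  ∃ X Y : Matrix ι ι ℤ, IsZeroOne X ∧ IsZeroOne Y ∧ X + Y + 1 = allOnes ι ∧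
    M * M = a • X + b • Y + k • (1 : Matrix ι ι ℤ)

lemma deza_of_pm {ι : Type*} [Fintype ι] [DecidableEq ι] (n : ℤ) (hn : Even n)
    (hcard : (Fintype.card ι : ℤ) = (2 * n - 1) * n)
    (W M : Matrix ι ι ℤ) (hM : ∀ i j, 2 * M i j = 1 + W i j)
    (hW : ∀ i j, W i j = 1 ∨ W i j = -1) (hs : ∀ i j, W i j = W j i)
    (hd : ∀ i, W i i = 1) (hr : ∀ i, ∑ j, W i j = n)
    (hdd : ∀ i, ∑ k, W i k * W k i = n * (2 * n - 1))
    (ho : ∀ i j, i ≠ j → (∑ k, W i k * W k j = n ∨ ∑ k, W i k * W k j = -n)) :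
    IsDezaReflexiveAdj M (n ^ 2) (n * (n + 1) / 2) (n ^ 2 / 2) := by
  classical
  have ha : 2 * (n ^ 2 / 2) = n ^ 2 :=
    Int.mul_ediv_cancel' (even_iff_two_dvd.mp (hn.pow_of_ne_zero two_ne_zero))
  have hb : 2 * (n * (n + 1) / 2) = n * (n + 1) :=
    Int.mul_ediv_cancel' (even_iff_two_dvd.mp (hn.mul_right _))
  have hsq : ∀ i j, 4 * (M * M) i j = (2 * n ^ 2 + n) + ∑ k, W i k * W k j := by
    intro i j
    have h1 : ∑ k, W k j = n := by
      rw [← hr j]; exact Finset.sum_congr rfl fun k _ => hs k j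
    have : 4 * (M * M) i j = ∑ k, (1 + W i k + W k j + W i k * W k j) := by
      rw [Matrix.mul_apply, Finset.mul_sum]
      refine Finset.sum_congr rfl fun k _ => ?_
      linear_combination (2 * M k j) * hM i k + (1 + W i k) * hM k j
    rw [this]
    simp only [Finset.sum_add_distrib, hr, h1, Finset.sum_const, Finset.card_univ, nsmul_eq_mul,
      mul_one, hcard]
    ring
  refine ⟨?_, ?_, ?_, ?_, ?_⟩
  · intro i j
    have := hM i j
    rcases hW i j with h | h <;> rw [h] at this <;> omega
  · ext i j
    have := hM i j
    have h2 := hM j i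
    have h3 := hs i j
    simp only [Matrix.transpose_apply]; omega
  · intro i
    have := hM i i
    rw [hd i] at this; omega
  · ext i j
    have : 2 * ∑ k, M i k = 2 * n ^ 2 := by
      rw [Finset.mul_sum, Finset.sum_congr rfl fun k _ => hM i k]
      simp only [Finset.sum_add_distrib, hr, Finset.sum_const, Finset.card_univ, nsmul_eq_mul,
        mul_one, hcard]
      ring
    simp only [Matrix.mul_apply, allOnes, Matrix.of_apply, mul_one, Matrix.smul_apply, smul_eq_mul]
    omega
  · refine ⟨Matrix.of fun i j => if i = j then 0 else
        if ∑ k, W i k * W k j = n then 0 else 1,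
      Matrix.of fun i j => if i = j then 0 else
        if ∑ k, W i k * W k j = n then 1 else 0, ?_, ?_, ?_, ?_⟩
    · intro i j; simp only [Matrix.of_apply]; split_ifs <;> simp
    · intro i j; simp only [Matrix.of_apply]; split_ifs <;> simp
    · ext i j
      simp only [Matrix.add_apply, Matrix.of_apply, allOnes, Matrix.one_apply]
      split_ifs <;> simp
    · ext i j
      have h4 := hsq i j
      simp only [Matrix.add_apply, Matrix.of_apply, Matrix.smul_apply, Matrix.one_apply,
        smul_eq_mul]
      by_cases hij : i = j
      · subst hij
        rw [hdd] at h4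
        simp only [if_true]
        linarith
      · simp only [if_neg hij]
        by_cases h : ∑ k, W i k * W k j = n
        · rw [h] at h4
          simp only [if_pos h]
          linarith
        · have h5 := (ho i j hij).resolve_left h
          rw [h5] at h4
          simp only [if_neg h]
          linarith

/-- circulant distance -/
def cl (n : ℕ) (a b : Fin (2 * n - 1)) : Fin n :=
  ⟨min (max a.1 b.1 - min a.1 b.1) (2 * n - 1 - (max a.1 b.1 - min a.1 b.1)), by omega⟩

lemma cl_comm (n : ℕ) (a b) : cl n a b = cl n b a := by
  simp only [cl, Fin.mk.injEq]; omega

lemma cl_zero (n : ℕ) (a b) : (cl n a b).1 = 0 ↔ a = b := by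
  simp only [cl, Fin.ext_iff]; omega

lemma cl_mid (n : ℕ) (a b) (hab : a ≠ b) : ∃ c, ∀ d, cl n a d = cl n d b ↔ d = c := by
  have h := fun h' => hab (Fin.ext h')
  have h1 := a.2
  have h2 := b.2
  refine ⟨⟨if (a.1 + b.1) % 2 = 0 then (a.1 + b.1) / 2 else
    if a.1 + b.1 < 2 * n - 1 then (a.1 + b.1 + (2 * n - 1)) / 2 else
      (a.1 + b.1 - (2 * n - 1)) / 2, by split_ifs <;> omega⟩, fun d => ?_⟩
  have h3 := d.2
  simp only [cl, Fin.ext_iff]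
  split_ifs <;> omega

lemma cl_fiber (n : ℕ) (a) (i : Fin n) (hi : i.1 ≠ 0) :
    (Finset.univ.filter fun c => cl n a c = i).card = 2 := by
  have h1 := a.2
  have h2 := i.2
  rw [Finset.card_eq_two]
  refine ⟨⟨if a.1 + i.1 < 2 * n - 1 then a.1 + i.1 else a.1 + i.1 - (2 * n - 1),
      by split_ifs <;> omega⟩,
    ⟨if i.1 ≤ a.1 then a.1 - i.1 else a.1 + (2 * n - 1) - i.1, by split_ifs <;> omega⟩, ?_, ?_⟩
  · simp only [ne_eq, Fin.ext_iff]
    split_ifs <;> omega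
  · ext c
    have h3 := c.2
    simp only [cl, Finset.mem_filter, Finset.mem_univ, true_and, Finset.mem_insert,
      Finset.mem_singleton, Fin.ext_iff]
    split_ifs <;> omega

lemma cl_sum (n : ℕ) (a) (z : Fin n) (hz : z.1 = 0) (g : Fin n → ℤ) :
    ∑ c, g (cl n a c) = 2 * ∑ i, g i - g z := by
  have h1 : ∑ c, g (cl n a c) =
      ∑ i, ((Finset.univ.filter fun c => cl n a c = i).card : ℤ) * g i := by
    rw [← Finset.sum_fiberwise (s := Finset.univ) (g := fun c => cl n a c)]
    refine Finset.sum_congr rfl fun i _ => ?_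
    rw [Finset.sum_congr rfl (g := fun _ => g i)]
    · simp
    · intro c hc; rw [(Finset.mem_filter.mp hc).2]
  have h0 : (Finset.univ.filter fun c => cl n a c = z).card = 1 := by
    rw [Finset.card_eq_one]
    refine ⟨a, ?_⟩
    ext c
    have := cl_zero n a c
    simp only [Finset.mem_filter, Finset.mem_univ, true_and, Finset.mem_singleton]
    rw [Fin.ext_iff, hz, this, eq_comm]
  have h2 : ∀ i, ((Finset.univ.filter fun c => cl n a c = i).card : ℤ) * g i =
      2 * g i - (if i = z then g i else 0) := by
    intro i
    by_cases h : i = z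
    · subst h; rw [h0]; simp; ring
    · rw [cl_fiber n a i (fun h' => h (Fin.ext (h'.trans hz.symm)))]; simp [h]
  rw [h1, Finset.sum_congr rfl fun i _ => h2 i, Finset.sum_sub_distrib, Finset.mul_sum]
  simp

lemma deza_main (n : ℕ) (hn : Even n) (z : Fin n) (hz : z.1 = 0)
    (h : Fin n → Fin n → ℤ) (hp : ∀ i j, h i j = 1 ∨ h i j = -1) (h0 : ∀ j, h z j = 1)
    (hrow : ∀ i j, ∑ x, h i x * h j x = if i = j then (n : ℤ) else 0)
    (hcol : ∀ x y, ∑ i, h i x * h i y = if x = y then (n : ℤ) else 0)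
    (e : ℤ) (he : e = 1 ∨ e = -1)
    (M : Matrix (Fin (2 * n - 1) × Fin n) (Fin (2 * n - 1) × Fin n) ℤ)
    (hM : ∀ i j, 2 * M i j = 1 + (if i.1 = j.1 then 1 else e) *
      (h (cl n i.1 j.1) i.2 * h (cl n i.1 j.1) j.2)) :
    IsDezaReflexiveAdj M ((n : ℤ) ^ 2) ((n : ℤ) * ((n : ℤ) + 1) / 2) ((n : ℤ) ^ 2 / 2) := by
  have npos : 0 < n := z.pos
  have hclz : ∀ a, cl n a a = z := fun a =>
    Fin.ext (((cl_zero n a a).2 rfl).trans hz.symm)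
  have hclz' : ∀ a b, cl n a b = z ↔ a = b := fun a b => by
    rw [Fin.ext_iff, hz]; exact cl_zero n a b
  have hsq : ∀ i x, h i x * h i x = 1 := by
    intro i x; rcases hp i x with h | h <;> simp [h]
  have hes : ∀ p : Prop, ∀ _ : Decidable p,
      (if p then (1 : ℤ) else e) = 1 ∨ (if p then (1 : ℤ) else e) = -1 := by
    intro p _; split_ifs <;> simp [he]
  have hprod : ∀ a b : ℤ, (a = 1 ∨ a = -1) → (b = 1 ∨ b = -1) → (a * b = 1 ∨ a * b = -1) := by
    rintro a b (rfl | rfl) (rfl | rfl) <;> simp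
  have key : ∀ i j : Fin (2 * n - 1) × Fin n,
      ∑ k : Fin (2 * n - 1) × Fin n, ((if i.1 = k.1 then 1 else e) *
      (h (cl n i.1 k.1) i.2 * h (cl n i.1 k.1) k.2)) * ((if k.1 = j.1 then 1 else e) *
      (h (cl n k.1 j.1) k.2 * h (cl n k.1 j.1) j.2)) =
      ∑ c, if cl n i.1 c = cl n c j.1 then
        (n : ℤ) * (((if i.1 = c then 1 else e) * (if c = j.1 then 1 else e)) *
          (h (cl n i.1 c) i.2 * h (cl n c j.1) j.2)) else 0 := by
    intro i j
    rw [Fintype.sum_prod_type]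
    refine Finset.sum_congr rfl fun c _ => ?_
    have := hrow (cl n i.1 c) (cl n c j.1)
    trans (((if i.1 = c then 1 else e) * (if c = j.1 then 1 else e)) *
          (h (cl n i.1 c) i.2 * h (cl n c j.1) j.2)) *
          ∑ x, h (cl n i.1 c) x * h (cl n c j.1) x
    · rw [Finset.mul_sum]
      refine Finset.sum_congr rfl fun x _ => ?_
      dsimp only
      ring
    · rw [this]; split_ifs <;> ring
  refine deza_of_pm (n : ℤ) (by exact_mod_cast hn) ?_ (Matrix.of fun (i j : Fin (2 * n - 1) × Fin n) =>
    (if i.1 = j.1 then 1 else e) * (h (cl n i.1 j.1) i.2 * h (cl n i.1 j.1) j.2)) M hM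
    ?_ ?_ ?_ ?_ ?_ ?_
  · simp only [Fintype.card_prod, Fintype.card_fin]
    push_cast [Nat.cast_sub (show 1 ≤ 2 * n by omega)]
    ring
  · intro i j
    exact hprod _ _ (hes _ _) (hprod _ _ (hp _ _) (hp _ _))
  · intro i j
    simp only [Matrix.of_apply, cl_comm n i.1 j.1, eq_comm (a := i.1)]
    ring
  · intro i
    simp only [Matrix.of_apply, if_true, hsq]; norm_num
  · intro i
    simp only [Matrix.of_apply]
    rw [Fintype.sum_prod_type, Finset.sum_eq_single i.1]
    · simp [hclz, h0]
    · intro b _ hb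
      have h1 := hrow (cl n i.1 b) z
      rw [if_neg (by rw [hclz']; exact fun h => hb h.symm)] at h1
      simp only [h0, mul_one] at h1
      simp only [if_neg (Ne.symm hb)]
      rw [← Finset.mul_sum, ← Finset.mul_sum, h1]; simp
    · simp
  · intro i
    simp only [Matrix.of_apply]
    rw [key i i]
    trans ∑ c, (fun l => (n : ℤ) * (h l i.2 * h l i.2)) (cl n i.1 c)
    · refine Finset.sum_congr rfl fun c _ => ?_
      rw [if_pos (cl_comm n _ _), cl_comm n c i.1]
      have : ((if i.1 = c then 1 else e) * (if c = i.1 then 1 else e) : ℤ) = 1 := by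
        simp only [eq_comm (a := c)]
        split_ifs
        · rfl
        · rcases he with rfl | rfl <;> rfl
      rw [this]; ring
    · rw [cl_sum n i.1 z hz (fun l => (n : ℤ) * (h l i.2 * h l i.2))]
      simp only [hsq]
      simp
      ring
  · intro i j hij
    simp only [Matrix.of_apply]
    rw [key i j]
    by_cases hab : i.1 = j.1
    · right
      have hxy : i.2 ≠ j.2 := fun h' => hij (Prod.ext hab h')
      rw [← hab]
      trans ∑ c, (fun l => (n : ℤ) * (h l i.2 * h l j.2)) (cl n i.1 c)
      · refine Finset.sum_congr rfl fun c _ => ?_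
        rw [if_pos (cl_comm n _ _), cl_comm n c i.1]
        have : ((if i.1 = c then 1 else e) * (if c = i.1 then 1 else e) : ℤ) = 1 := by
          simp only [eq_comm (a := c)]
          split_ifs
          · rfl
          · rcases he with rfl | rfl <;> rfl
        rw [this]; ring
      · rw [cl_sum n i.1 z hz (fun l => (n : ℤ) * (h l i.2 * h l j.2))]
        rw [← Finset.mul_sum, hcol, if_neg hxy, h0, h0]
        ring
    · obtain ⟨c, hc⟩ := cl_mid n i.1 j.1 hab
      simp only [hc]
      rw [Finset.sum_ite_eq' Finset.univ c, if_pos (Finset.mem_univ _)]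
      rcases hprod _ _ (hprod _ _ (hes (i.1 = c) _) (hes (c = j.1) _))
        (hprod _ _ (hp (cl n i.1 c) i.2) (hp (cl n c j.1) j.2)) with h | h
      · left; rw [h, mul_one]
      · right; rw [h]; ring

/-- a Hadamard matrix of even order n yields a Siamese twin Deza reflexive
graph with parameters ((2n−1)n, n², n(n+1)/2, n²/2) sharing the entries of
N = I_{2n−1} ⊗ J_n. -/
theorem siamese_twin_deza_reflexive_from_hadamard (n : ℕ) (hn : Even n)
    (H : Matrix (Fin n) (Fin n) ℤ)
    (hH : ∀ i j, H i j = 1 ∨ H i j = -1)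
    (hHH : H * Hᵀ = (n : ℤ) • (1 : Matrix (Fin n) (Fin n) ℤ)) :
    ∃ K L : Matrix (Fin (2 * n - 1) × Fin n) (Fin (2 * n - 1) × Fin n) ℤ,
      IsZeroOne K ∧ IsZeroOne L ∧
      K + L = (allOnes (Fin (2 * n - 1)) - 1) ⊗ₖ allOnes (Fin n) ∧
      IsDezaReflexiveAdj
        ((1 : Matrix (Fin (2 * n - 1)) (Fin (2 * n - 1)) ℤ) ⊗ₖ allOnes (Fin n) + K)
        ((n : ℤ) ^ 2) ((n : ℤ) * ((n : ℤ) + 1) / 2) ((n : ℤ) ^ 2 / 2) ∧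
      IsDezaReflexiveAdj
        ((1 : Matrix (Fin (2 * n - 1)) (Fin (2 * n - 1)) ℤ) ⊗ₖ allOnes (Fin n) + L)
        ((n : ℤ) ^ 2) ((n : ℤ) * ((n : ℤ) + 1) / 2) ((n : ℤ) ^ 2 / 2) := by
  rcases Nat.eq_zero_or_pos n with rfl | npos
  · have : IsEmpty (Fin (2 * 0 - 1) × Fin 0) := ⟨fun x => x.2.elim0⟩
    refine ⟨0, 0, fun i => isEmptyElim i, fun i => isEmptyElim i, Subsingleton.elim _ _, ?_, ?_⟩ <;>
    exact ⟨fun i => isEmptyElim i, Subsingleton.elim _ _, fun i => isEmptyElim i,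
      Subsingleton.elim _ _, 0, 0, fun i => isEmptyElim i, fun i => isEmptyElim i,
      Subsingleton.elim _ _, Subsingleton.elim _ _⟩
  have hHH' : Hᵀ * H = (n : ℤ) • (1 : Matrix (Fin n) (Fin n) ℤ) := by
    have hdet : H.det ≠ 0 := by
      intro h
      have := congrArg Matrix.det hHH
      rw [Matrix.det_mul, h, zero_mul, Matrix.det_smul, Matrix.det_one, mul_one] at this
      exact pow_ne_zero _ (by exact_mod_cast npos.ne') this.symm
    have h1 : H * (Hᵀ * H) = H * ((n : ℤ) • (1 : Matrix (Fin n) (Fin n) ℤ)) := by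
      rw [← Matrix.mul_assoc, hHH, Matrix.smul_mul, Matrix.mul_smul, Matrix.one_mul, Matrix.mul_one]
    have h2 : H.det • (Hᵀ * H) = H.det • ((n : ℤ) • (1 : Matrix (Fin n) (Fin n) ℤ)) := by
      have := congrArg (fun A => H.adjugate * A) h1
      simp only [← Matrix.mul_assoc H.adjugate, Matrix.adjugate_mul] at this
      simpa only [Matrix.smul_mul, Matrix.one_mul] using this
    exact smul_right_injective _ hdet h2
  have hsq : ∀ i x, H i x * H i x = 1 := by
    intro i x; rcases hH i x with h | h <;> simp [h]
  let z : Fin n := ⟨0, npos⟩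
  let h : Fin n → Fin n → ℤ := fun i x => H i x * H z x
  have hp : ∀ i j, h i j = 1 ∨ h i j = -1 := by
    intro i j
    rcases hH i j with h1 | h1 <;> rcases hH z j with h2 | h2 <;> simp [h, h1, h2]
  have h0 : ∀ j, h z j = 1 := fun j => hsq z j
  have hrow : ∀ i j, ∑ x, h i x * h j x = if i = j then (n : ℤ) else 0 := by
    intro i j
    have := congrFun (congrFun hHH i) j
    simp only [Matrix.mul_apply, Matrix.transpose_apply, Matrix.smul_apply, Matrix.one_apply,
      smul_eq_mul, mul_ite, mul_one, mul_zero] at this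
    rw [← this]
    refine Finset.sum_congr rfl fun x _ => ?_
    linear_combination (H i x * H j x) * hsq z x
  have hcol : ∀ x y, ∑ i, h i x * h i y = if x = y then (n : ℤ) else 0 := by
    intro x y
    have := congrFun (congrFun hHH' x) y
    simp only [Matrix.mul_apply, Matrix.transpose_apply, Matrix.smul_apply, Matrix.one_apply,
      smul_eq_mul, mul_ite, mul_one, mul_zero] at this
    trans (H z x * H z y) * ∑ i, H i x * H i y
    · rw [Finset.mul_sum]
      refine Finset.sum_congr rfl fun i _ => ?_
      simp only [h]; ring
    · rw [this]
      split_ifs with hxy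
      · subst hxy; rw [hsq, one_mul]
      · simp
  have hpp : ∀ i x y, h i x * h i y = 1 ∨ h i x * h i y = -1 := by
    intro i x y
    rcases hp i x with h1 | h1 <;> rcases hp i y with h2 | h2 <;> simp [h1, h2]
  have hcl : ∀ a, cl n a a = z := fun a => Fin.ext ((cl_zero n a a).2 rfl)
  refine ⟨Matrix.of fun i j => if i.1 = j.1 then 0 else
      (1 + h (cl n i.1 j.1) i.2 * h (cl n i.1 j.1) j.2) / 2,
    Matrix.of fun i j => if i.1 = j.1 then 0 else
      (1 - h (cl n i.1 j.1) i.2 * h (cl n i.1 j.1) j.2) / 2, ?_, ?_, ?_, ?_, ?_⟩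
  · intro i j
    simp only [Matrix.of_apply]
    rcases hpp (cl n i.1 j.1) i.2 j.2 with h1 | h1 <;> rw [h1] <;> split_ifs <;> norm_num
  · intro i j
    simp only [Matrix.of_apply]
    rcases hpp (cl n i.1 j.1) i.2 j.2 with h1 | h1 <;> rw [h1] <;> split_ifs <;> norm_num
  · ext i j
    simp only [Matrix.add_apply, Matrix.of_apply, Matrix.kroneckerMap_apply, Matrix.sub_apply,
      allOnes, Matrix.one_apply]
    rcases hpp (cl n i.1 j.1) i.2 j.2 with h1 | h1 <;> rw [h1] <;> split_ifs <;> norm_num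
  · refine deza_main n hn z rfl h hp h0 hrow hcol 1 (Or.inl rfl) _ fun i j => ?_
    simp only [Matrix.add_apply, Matrix.of_apply, Matrix.kroneckerMap_apply,
      allOnes, Matrix.one_apply]
    by_cases hij : i.1 = j.1
    · simp only [hij, if_true, hcl, h0]; norm_num
    · rcases hpp (cl n i.1 j.1) i.2 j.2 with h1 | h1 <;> rw [h1] <;> simp only [if_neg hij] <;>
        norm_num
  · refine deza_main n hn z rfl h hp h0 hrow hcol (-1) (Or.inr rfl) _ fun i j => ?_
    simp only [Matrix.add_apply, Matrix.of_apply, Matrix.kroneckerMap_apply,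
      allOnes, Matrix.one_apply]
    by_cases hij : i.1 = j.1
    · simp only [hij, if_true, hcl, h0]; norm_num
    · rcases hpp (cl n i.1 j.1) i.2 j.2 with h1 | h1 <;> rw [h1] <;> simp only [if_neg hij] <;>
        norm_num
end

section
/- Let M be the adjacency matrix of a directed (n,k,b,a)-Deza graph of type II with witnessing (0,1)-matrices X and Y (so M·J = J·M = k·J, M·Mᵀ = Mᵀ·M = a·X + b·Y + k·I and X + Y + I = J), and suppose a ≠ b. Then, viewing all matrices over the integers, (b−a)·(X·𝟙) = (b(n−1) − k² + k)·𝟙 and (a−b)·(Y·𝟙) = (a(n−1) − k² + k)·𝟙, where 𝟙 is the all-ones column vector; i.e., every row of X has the same sum α = (b(n−1)−k²+k)/(b−a) and every row of Y has the same sum β = (a(n−1)−k²+k)/(a−b), independent of the vertex. -/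
open Matrix Kronecker

/-- for a directed (n,k,b,a)-Deza graph of type II with witnessing
matrices X, Y and a ≠ b, every row of X sums to α = (b(n−1)−k²+k)/(b−a) and every row
of Y sums to β = (a(n−1)−k²+k)/(a−b). -/
theorem deza_digraph_typeII_row_sums (n : ℕ) (a b k : ℤ)
    (h0a : 0 ≤ a) (hab : a ≤ b) (hbk : b ≤ k) (hkn : k ≤ (n : ℤ))
    (M X Y : Matrix (Fin n) (Fin n) ℤ)
    (hM01 : IsZeroOne M) (hX01 : IsZeroOne X) (hY01 : IsZeroOne Y)
    (hMJ : M * allOnes (Fin n) = k • allOnes (Fin n))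
    (hJM : allOnes (Fin n) * M = k • allOnes (Fin n))
    (hMMt : M * Mᵀ = a • X + b • Y + k • (1 : Matrix (Fin n) (Fin n) ℤ))
    (hMtM : Mᵀ * M = a • X + b • Y + k • (1 : Matrix (Fin n) (Fin n) ℤ))
    (hXYI : X + Y + 1 = allOnes (Fin n))
    (hne : a ≠ b) :
    ((b - a) • (X *ᵥ fun _ => (1 : ℤ)) = (fun _ => b * ((n : ℤ) - 1) - k ^ 2 + k)) ∧
    ((a - b) • (Y *ᵥ fun _ => (1 : ℤ)) = (fun _ => a * ((n : ℤ) - 1) - k ^ 2 + k)) := by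
  have e1 : M *ᵥ (fun _ => (1 : ℤ)) = fun _ => k := by
    ext i
    have h := congrFun (congrFun hMJ i) i
    simpa [allOnes, Matrix.mul_apply, Matrix.mulVec, dotProduct] using h
  have e2 : Mᵀ *ᵥ (fun _ => (1 : ℤ)) = fun _ => k := by
    ext i
    have h := congrFun (congrFun hJM i) i
    simpa [allOnes, Matrix.mul_apply, Matrix.mulVec, dotProduct] using h
  have e3 : ∀ i, a * (X *ᵥ fun _ => (1 : ℤ)) i + b * (Y *ᵥ fun _ => (1 : ℤ)) i + k = k ^ 2 := by
    intro i
    have h := congrFun (congrArg (fun A => A *ᵥ (fun _ => (1 : ℤ))) hMMt) i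
    have e4 : (fun _ : Fin n => k) = k • (fun _ : Fin n => (1 : ℤ)) := by
      ext j
      simp
    simp only [← Matrix.mulVec_mulVec, e2, Matrix.add_mulVec, Matrix.smul_mulVec,
      Matrix.one_mulVec] at h
    rw [e4, Matrix.mulVec_smul, e1] at h
    simp only [Pi.add_apply, Pi.smul_apply, smul_eq_mul] at h
    linarith
  have e5 : ∀ i, (X *ᵥ fun _ => (1 : ℤ)) i + (Y *ᵥ fun _ => (1 : ℤ)) i + 1 = n := by
    intro i
    have h := congrFun (congrArg (fun A => A *ᵥ (fun _ => (1 : ℤ))) hXYI) i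
    simp only [Matrix.add_mulVec, Matrix.one_mulVec, Pi.add_apply] at h
    rw [h]
    simp [allOnes, Matrix.mulVec, dotProduct]
  constructor
  · ext i
    simp only [Pi.smul_apply, smul_eq_mul]
    linear_combination b * e5 i - e3 i
  · ext i
    simp only [Pi.smul_apply, smul_eq_mul]
    linear_combination a * e5 i - e3 i
end

section
/- Let M be an n×n (0,1)-matrix which is the incidence matrix of a symmetric (n,k,λ) design, i.e., M·J = J·M = k·J and M·Mᵀ = Mᵀ·M = (k−λ)·I + λ·J, and let n' ≥ 1. Then M ⊗ J_{n'} is the adjacency matrix of a directed Deza graph of type II with parameters (nn', kn', kn', λn'); explicitly, with M' = M ⊗ J_{n'} one has M'·J = J·M' = kn'·J and M'·M'ᵀ = M'ᵀ·M' = λn'·X + kn'·Y + kn'·I, where Y = I_n ⊗ J_{n'} − I_{nn'} and X = J_{nn'} − I_n ⊗ J_{n'} are (0,1)-matrices with X + Y + I = J. -/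
open Matrix Kronecker

/-- if M is the incidence matrix of a symmetric (n,k,λ) design and n' ≥ 1,
then M ⊗ J_{n'} is the adjacency matrix of a directed Deza graph of type II with
parameters (nn', kn', kn', λn'), with explicit witnesses X = J − I_n ⊗ J_{n'} and
Y = I_n ⊗ J_{n'} − I. -/
theorem deza_digraph_typeII_from_symmetric_design (n n' : ℕ) (k l : ℤ) (hn' : 1 ≤ n')
    (M : Matrix (Fin n) (Fin n) ℤ)
    (hM01 : IsZeroOne M)
    (hMJ : M * allOnes (Fin n) = k • allOnes (Fin n))
    (hJM : allOnes (Fin n) * M = k • allOnes (Fin n))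
    (hMMt : M * Mᵀ = (k - l) • (1 : Matrix (Fin n) (Fin n) ℤ) + l • allOnes (Fin n))
    (hMtM : Mᵀ * M = (k - l) • (1 : Matrix (Fin n) (Fin n) ℤ) + l • allOnes (Fin n))
    (M' : Matrix (Fin n × Fin n') (Fin n × Fin n') ℤ)
    (hM' : M' = M ⊗ₖ allOnes (Fin n'))
    (X Y : Matrix (Fin n × Fin n') (Fin n × Fin n') ℤ)
    (hX : X = allOnes (Fin n × Fin n') -
      (1 : Matrix (Fin n) (Fin n) ℤ) ⊗ₖ allOnes (Fin n'))
    (hY : Y = (1 : Matrix (Fin n) (Fin n) ℤ) ⊗ₖ allOnes (Fin n') - 1) :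
    IsZeroOne M' ∧ IsZeroOne X ∧ IsZeroOne Y ∧
    X + Y + 1 = allOnes (Fin n × Fin n') ∧
    M' * allOnes (Fin n × Fin n') = (k * (n' : ℤ)) • allOnes (Fin n × Fin n') ∧
    allOnes (Fin n × Fin n') * M' = (k * (n' : ℤ)) • allOnes (Fin n × Fin n') ∧
    M' * M'ᵀ = (l * (n' : ℤ)) • X + (k * (n' : ℤ)) • Y +
      (k * (n' : ℤ)) • (1 : Matrix (Fin n × Fin n') (Fin n × Fin n') ℤ) ∧
    M'ᵀ * M' = (l * (n' : ℤ)) • X + (k * (n' : ℤ)) • Y +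
      (k * (n' : ℤ)) • (1 : Matrix (Fin n × Fin n') (Fin n × Fin n') ℤ) := by
  have hJJ : allOnes (Fin n') * allOnes (Fin n') = (n' : ℤ) • allOnes (Fin n') := by
    ext i j
    simp [allOnes, Matrix.mul_apply]
  have hJT : (allOnes (Fin n'))ᵀ = allOnes (Fin n') := by
    ext i j
    simp [allOnes]
  have hK : allOnes (Fin n × Fin n') = allOnes (Fin n) ⊗ₖ allOnes (Fin n') := by
    ext i j
    simp [allOnes]
  have key : ((k - l) • (1 : Matrix (Fin n) (Fin n) ℤ) + l • allOnes (Fin n)) ⊗ₖ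
      ((n' : ℤ) • allOnes (Fin n')) = (l * (n' : ℤ)) • X + (k * (n' : ℤ)) • Y +
      (k * (n' : ℤ)) • (1 : Matrix (Fin n × Fin n') (Fin n × Fin n') ℤ) := by
    subst hX hY
    ext i j
    simp only [allOnes, Matrix.kroneckerMap_apply, Matrix.add_apply, Matrix.sub_apply,
      Matrix.smul_apply, Matrix.of_apply, smul_eq_mul]
    ring
  refine ⟨?_, ?_, ?_, ?_, ?_, ?_, ?_, ?_⟩
  · subst hM'
    intro i j
    simpa [allOnes] using hM01 i.1 j.1
  · subst hX
    intro i j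
    by_cases h : i.1 = j.1 <;> simp [allOnes, Matrix.one_apply, h]
  · subst hY
    rintro ⟨a, b⟩ ⟨c, d⟩
    by_cases h : a = c <;> by_cases h2 : b = d <;>
      simp [allOnes, Matrix.one_apply, h, h2]
  · subst hX hY
    abel
  · rw [hM', hK, ← Matrix.mul_kronecker_mul, hMJ, hJJ, Matrix.smul_kronecker,
      Matrix.kronecker_smul, smul_smul]
  · rw [hM', hK, ← Matrix.mul_kronecker_mul, hJM, hJJ, Matrix.smul_kronecker,
      Matrix.kronecker_smul, smul_smul]
  · rw [← key, hM', ← Matrix.kroneckerMap_transpose, ← Matrix.mul_kronecker_mul, hJT, hMMt, hJJ]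
  · rw [← key, hM', ← Matrix.kroneckerMap_transpose, ← Matrix.mul_kronecker_mul, hJT, hMtM, hJJ]
end

section
/- Let q be a power of an odd prime and let φ, C_{γ,α} (γ,α ∈ 𝔽_q) and C_{y,α} be as in the context. Then for every α ∈ 𝔽_q, Σ_{γ∈𝔽_q} C_{γ,α} + C_{y,α} = q·(I_q ⊗ φ(α)) + (J_q + φ(α) − I_q) ⊗ J_q, where I_q ⊗ φ(α) is the block-diagonal matrix with every diagonal block equal to φ(α). -/
open Matrix Kronecker

/-- The regular permutation representation of the additive group of `F`:
`phiMat F x` has (u,v)-entry 1 iff u = v + x. -/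
def phiMat (F : Type*) [AddGroup F] [DecidableEq F] (x : F) : Matrix F F ℤ :=
  Matrix.of fun u v => if u = v + x then 1 else 0

/-- The auxiliary matrix C_{α,α'}: the q²×q² block matrix whose (β,β')-block is
φ(α(β'−β) + α'). -/
def Cmat (F : Type*) [Field F] [DecidableEq F] (α α' : F) :
    Matrix (F × F) (F × F) ℤ :=
  Matrix.of fun p p' => phiMat F (α * (p'.1 - p.1) + α') p.2 p'.2

/-- The auxiliary matrix C_{y,α} = φ(α) ⊗ J_q. -/
def CyMat (F : Type*) [Field F] [Fintype F] [DecidableEq F] (α : F) :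
    Matrix (F × F) (F × F) ℤ :=
  phiMat F α ⊗ₖ allOnes F

/-- Σ_{γ∈𝔽_q} C_{γ,α} + C_{y,α} = q·(I_q ⊗ φ(α)) + (J_q + φ(α) − I_q) ⊗ J_q. -/
theorem sum_of_auxiliary_matrices (F : Type*) [Field F] [Fintype F] [DecidableEq F]
    (hodd : Odd (Fintype.card F)) (α : F) :
    (∑ γ : F, Cmat F γ α) + CyMat F α =
      (Fintype.card F : ℤ) • ((1 : Matrix F F ℤ) ⊗ₖ phiMat F α) +
      (allOnes F + phiMat F α - 1) ⊗ₖ allOnes F := by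
  ext ⟨b, u⟩ ⟨b', v⟩
  simp only [Matrix.add_apply, Matrix.sum_apply, Matrix.smul_apply, Matrix.sub_apply,
    Matrix.kroneckerMap_apply, Cmat, CyMat, allOnes, Matrix.of_apply, Matrix.one_apply,
    smul_eq_mul, mul_one]
  by_cases h : b = b'
  · subst h
    simp [phiMat]
  · have hd : b' - b ≠ 0 := sub_ne_zero.mpr (Ne.symm h)
    have key : ∀ γ : F, (u = v + (γ * (b' - b) + α)) ↔ γ = (u - v - α) / (b' - b) := by
      intro γ
      rw [eq_div_iff hd]
      constructor
      · intro h1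
        rw [h1]
        ring
      · intro h1
        rw [h1]
        ring
    have hs : ∑ γ : F, phiMat F (γ * (b' - b) + α) u v = 1 := by
      simp only [phiMat, Matrix.of_apply, key]
      simp
    rw [hs]
    simp [h]
end

section
/- Let q be a power of an odd prime and let φ, C_{γ,α} (γ,α ∈ 𝔽_q) and C_{y,α} be as in the context. Then for all α, α' ∈ 𝔽_q: (i) C_{γ,α}·C_{γ,α'} = q·C_{γ,α+α'} for every γ ∈ 𝔽_q, and C_{y,α}·C_{y,α'} = q·C_{y,α+α'}; (ii) C_{γ,α}·C_{γ',α'} = J_{q²} for all distinct γ, γ' ∈ 𝔽_q, and C_{γ,α}·C_{y,α'} = C_{y,α'}·C_{γ,α} = J_{q²} for every γ ∈ 𝔽_q. -/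
open Matrix Kronecker

theorem phi_sum_aux (F : Type*) [Field F] [Fintype F] [DecidableEq F] (x y u v : F) :
    ∑ w, phiMat F x u w * phiMat F y w v = phiMat F (x + y) u v := by
  have h : ∀ w, phiMat F x u w * phiMat F y w v
      = if w = v + y then (if u = v + y + x then 1 else 0) else 0 := by
    intro w
    simp only [phiMat, Matrix.of_apply]
    by_cases hw : w = v + y
    · subst hw; simp
    · simp [hw]
  rw [Finset.sum_congr rfl (fun w _ => h w), Finset.sum_ite_eq' Finset.univ]
  simp only [Finset.mem_univ, if_true, phiMat, Matrix.of_apply]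
  rw [add_comm x y, add_assoc]

theorem phi_row_aux (F : Type*) [Field F] [Fintype F] [DecidableEq F] (x u : F) :
    ∑ w, phiMat F x u w = 1 := by
  have h : ∀ w, phiMat F x u w = if w = u - x then 1 else 0 := by
    intro w
    simp only [phiMat, Matrix.of_apply, eq_sub_iff_add_eq, eq_comm]
  rw [Finset.sum_congr rfl (fun w _ => h w), Finset.sum_ite_eq' Finset.univ]
  simp

theorem phi_col_aux (F : Type*) [Field F] [Fintype F] [DecidableEq F] (x v : F) :
    ∑ w, phiMat F x w v = 1 := by
  simp [phiMat]

theorem Cmat_mul_aux (F : Type*) [Field F] [Fintype F] [DecidableEq F] (γ γ' α α' : F)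
    (p r : F × F) : (Cmat F γ α * Cmat F γ' α') p r
      = ∑ b, phiMat F (γ * (b - p.1) + α + (γ' * (r.1 - b) + α')) p.2 r.2 := by
  rw [Matrix.mul_apply, Fintype.sum_prod_type]
  refine Finset.sum_congr rfl fun b _ => ?_
  rw [← phi_sum_aux]
  rfl

/-- products of the auxiliary matrices: (i) C_{γ,α}·C_{γ,α'} = q·C_{γ,α+α'}
and C_{y,α}·C_{y,α'} = q·C_{y,α+α'}; (ii) for distinct first indices the product is the
all-ones matrix J_{q²}. -/
theorem products_of_auxiliary_matrices (F : Type*) [Field F] [Fintype F] [DecidableEq F]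
    (hodd : Odd (Fintype.card F)) (α α' : F) :
    (∀ γ : F, Cmat F γ α * Cmat F γ α' = (Fintype.card F : ℤ) • Cmat F γ (α + α')) ∧
    (CyMat F α * CyMat F α' = (Fintype.card F : ℤ) • CyMat F (α + α')) ∧
    (∀ γ γ' : F, γ ≠ γ' → Cmat F γ α * Cmat F γ' α' = allOnes (F × F)) ∧
    (∀ γ : F, Cmat F γ α * CyMat F α' = allOnes (F × F) ∧
      CyMat F α' * Cmat F γ α = allOnes (F × F)) := by
  refine ⟨?_, ?_, ?_, ?_⟩
  · intro γ
    ext p r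
    rw [Cmat_mul_aux]
    have h : ∀ b, γ * (b - p.1) + α + (γ * (r.1 - b) + α') = γ * (r.1 - p.1) + (α + α') := by
      intro b; ring
    simp [h, Cmat]
  · ext p r
    rw [Matrix.mul_apply, Fintype.sum_prod_type]
    simp [CyMat, allOnes, Matrix.kroneckerMap_apply, ← phi_sum_aux F α α' p.1 r.1,
      Finset.mul_sum]
  · intro γ γ' hne
    ext p r
    rw [Cmat_mul_aux]
    have hs : γ - γ' ≠ 0 := sub_ne_zero.mpr hne
    have h : ∀ b, phiMat F (γ * (b - p.1) + α + (γ' * (r.1 - b) + α')) p.2 r.2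
        = if b = (p.2 - r.2 + γ * p.1 - α - γ' * r.1 - α') / (γ - γ') then 1 else 0 := by
      intro b
      simp only [phiMat, Matrix.of_apply]
      refine if_congr ?_ rfl rfl
      rw [eq_div_iff hs]
      constructor
      · intro h; rw [h]; ring
      · intro h; linear_combination -h
    rw [Finset.sum_congr rfl (fun w _ => h w), Finset.sum_ite_eq' Finset.univ]
    simp [allOnes]
  · intro γ
    constructor
    · ext p r
      rw [Matrix.mul_apply, Fintype.sum_prod_type]
      simp [CyMat, Cmat, allOnes, Matrix.kroneckerMap_apply, ← Finset.sum_mul, phi_row_aux,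
        phi_col_aux]
    · ext p r
      rw [Matrix.mul_apply, Fintype.sum_prod_type]
      simp [CyMat, Cmat, allOnes, Matrix.kroneckerMap_apply, ← Finset.mul_sum, phi_row_aux,
        phi_col_aux]
end

section
/- Let q ≥ 1 and set m = 2q+3. Let V be the m×m cyclic shift permutation matrix (V has (i,j)-entry 1 iff j ≡ i+1 mod m), and for i = 1, …, q+1 set P_i = V^i + V^{−i}. Then Σ_{1 ≤ i, j ≤ q+1, i ≠ j} P_i·P_j = 2q·(J_m − I_m). -/
open Matrix

/-- The m×m cyclic shift permutation matrix: (i,j)-entry 1 iff j ≡ i+1 (mod m). -/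
def shiftV (m : ℕ) : Matrix (Fin m) (Fin m) ℤ :=
  Matrix.of fun i j => if (j : ℕ) = ((i : ℕ) + 1) % m then 1 else 0

lemma aux_pow (m : ℕ) (hm : 0 < m) (k : ℕ) (i j : Fin m) :
    (shiftV m ^ k) i j = if (j : ℕ) = ((i : ℕ) + k) % m then 1 else 0 := by
  induction k generalizing i j with
  | zero =>
    simp only [pow_zero, Matrix.one_apply, add_zero, Nat.mod_eq_of_lt i.2, Fin.ext_iff]
    simp only [eq_comm]
  | succ k ih =>
    rw [pow_succ, Matrix.mul_apply,
      Finset.sum_eq_single (⟨((i : ℕ) + k) % m, Nat.mod_lt _ hm⟩ : Fin m)]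
    · rw [ih]
      simp [shiftV, add_assoc]
    · intro b _ hb
      rw [ih, if_neg, zero_mul]
      intro h
      exact hb (Fin.ext h)
    · simp

lemma aux_pow_m (m : ℕ) (hm : 0 < m) : shiftV m ^ m = 1 := by
  ext i j
  rw [aux_pow m hm, ← pow_zero (shiftV m), aux_pow m hm]
  simp

lemma aux_VT (m : ℕ) (hm : 0 < m) : shiftV m * (shiftV m)ᵀ = 1 := by
  ext i j
  rw [Matrix.mul_apply,
      Finset.sum_eq_single (⟨((i : ℕ) + 1) % m, Nat.mod_lt _ hm⟩ : Fin m)]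
  · have hi := i.2
    have hj := j.2
    simp only [shiftV, Matrix.of_apply, Matrix.transpose_apply, if_true, one_mul,
      Matrix.one_apply, Fin.ext_iff]
    congr 1
    apply propext
    constructor
    · intro h
      have h2 : (i : ℕ) ≡ j [MOD m] := Nat.ModEq.add_right_cancel' 1 h
      exact Nat.ModEq.eq_of_lt_of_lt h2 hi hj
    · intro h
      rw [h]
  · intro b _ hb
    simp only [shiftV, Matrix.of_apply]
    rw [if_neg, zero_mul]
    intro h
    exact hb (Fin.ext h)
  · simp

lemma aux_T (m : ℕ) (hm : 0 < m) (k : ℕ) (hk : k ≤ m) :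
    (shiftV m)ᵀ ^ k = shiftV m ^ (m - k) := by
  have hc : Commute (shiftV m) (shiftV m)ᵀ := by
    unfold Commute SemiconjBy
    rw [aux_VT m hm, mul_eq_one_comm.mp (aux_VT m hm)]
  have h : shiftV m ^ k * (shiftV m)ᵀ ^ k = 1 := by
    rw [← hc.mul_pow, aux_VT m hm, one_pow]
  calc (shiftV m)ᵀ ^ k = shiftV m ^ m * (shiftV m)ᵀ ^ k := by rw [aux_pow_m m hm, one_mul]
    _ = shiftV m ^ (m - k) * (shiftV m ^ k * (shiftV m)ᵀ ^ k) := by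
        rw [← mul_assoc, ← pow_add, Nat.sub_add_cancel hk]
    _ = _ := by rw [h, mul_one]

lemma aux_J (m : ℕ) (hm : 0 < m) : ∑ k ∈ Finset.range m, shiftV m ^ k = allOnes (Fin m) := by
  ext i j
  have hi := i.2
  have hj := j.2
  rw [Matrix.sum_apply]
  simp only [aux_pow m hm, allOnes, Matrix.of_apply]
  rw [Finset.sum_eq_single ((j + (m - i)) % m : ℕ)]
  · rw [if_pos]
    rw [Nat.add_mod_mod, show (i : ℕ) + (j + (m - i)) = j + m by omega, Nat.add_mod_right,
      Nat.mod_eq_of_lt hj]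
  · intro b hb hne
    rw [if_neg]
    intro h
    apply hne
    rw [h, Nat.mod_add_mod, show (i : ℕ) + b + (m - i) = b + m by omega, Nat.add_mod_right,
      Nat.mod_eq_of_lt (Finset.mem_range.mp hb)]
  · intro h
    exact absurd (Finset.mem_range.mpr (Nat.mod_lt _ hm)) h

lemma aux_JJ (m : ℕ) : allOnes (Fin m) * allOnes (Fin m) = (m : ℤ) • allOnes (Fin m) := by
  ext i j
  simp [Matrix.mul_apply, allOnes]

lemma aux_s1 {M : Type*} [AddCommMonoid M] (f : ℕ → M) (n : ℕ) :
    ∑ i ∈ Finset.range n, (f (i + 1) + f (2 * n + 1 - (i + 1))) =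
      ∑ k ∈ Finset.range (2 * n), f (k + 1) := by
  rw [two_mul n, Finset.sum_range_add, Finset.sum_add_distrib]
  congr 1
  rw [← Finset.sum_range_reflect]
  apply Finset.sum_congr rfl
  intro i hi
  have := Finset.mem_range.mp hi
  congr 1
  omega

lemma aux_s2 {M : Type*} [AddCommMonoid M] (f : ℕ → M) (n : ℕ) :
    ∑ i ∈ Finset.range n, (f (2 * (i + 1)) + f (2 * n + 1 - 2 * (i + 1))) =
      ∑ k ∈ Finset.range (2 * n), f (k + 1) := by
  have h : ∑ i ∈ Finset.range n, f (2 * n + 1 - 2 * (i + 1)) =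
      ∑ i ∈ Finset.range n, f (2 * i + 1) := by
    rw [← Finset.sum_range_reflect]
    apply Finset.sum_congr rfl
    intro i hi
    have := Finset.mem_range.mp hi
    congr 1
    omega
  rw [Finset.sum_add_distrib, h, ← Finset.sum_add_distrib]
  clear h
  induction n with
  | zero => simp
  | succ n ih =>
    rw [Finset.sum_range_succ, ih, show 2 * (n + 1) = 2 * n + 1 + 1 by ring,
      Finset.sum_range_succ, Finset.sum_range_succ]
    abel

/-- for m = 2q+3 and P_i = V^i + V^{−i} (1 ≤ i ≤ q+1),
Σ_{i ≠ j} P_i·P_j = 2q·(J_m − I_m). -/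
theorem sum_shift_products (q : ℕ) (hq : 1 ≤ q) :
    ∑ p ∈ ((Finset.Icc 1 (q + 1)) ×ˢ (Finset.Icc 1 (q + 1))).filter
        (fun p => p.1 ≠ p.2),
      ((shiftV (2 * q + 3) ^ p.1 + (shiftV (2 * q + 3))ᵀ ^ p.1) *
       (shiftV (2 * q + 3) ^ p.2 + (shiftV (2 * q + 3))ᵀ ^ p.2)) =
    (2 * q : ℤ) • (allOnes (Fin (2 * q + 3)) - 1) := by
  have hm : 0 < 2 * q + 3 := by omega
  have hT := aux_T (2 * q + 3) hm
  have hJ := aux_J (2 * q + 3) hm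
  have hJJ := aux_JJ (2 * q + 3)
  have hP := aux_pow_m (2 * q + 3) hm
  set V := shiftV (2 * q + 3) with hV
  set J := allOnes (Fin (2 * q + 3)) with hJdef
  have hS : ∑ k ∈ Finset.range (2 * (q + 1)), V ^ (k + 1) = J - 1 := by
    rw [← hJ, Finset.sum_range_succ', pow_zero, add_sub_cancel_right]
    rfl
  have hIcc : ∀ g : ℕ → Matrix (Fin (2 * q + 3)) (Fin (2 * q + 3)) ℤ,
      ∑ i ∈ Finset.Icc 1 (q + 1), g i = ∑ i ∈ Finset.range (q + 1), g (i + 1) := by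
    intro g
    rw [Finset.range_eq_Ico, Finset.sum_Ico_add' g 0 (q + 1) 1]
    rfl
  have h1 : ∑ i ∈ Finset.Icc 1 (q + 1), (V ^ i + Vᵀ ^ i) = J - 1 := by
    rw [hIcc, ← hS, ← aux_s1 (fun k => V ^ k)]
    apply Finset.sum_congr rfl
    intro i hi
    have := Finset.mem_range.mp hi
    rw [hT _ (by omega)]
    rfl
  have h2 : ∑ i ∈ Finset.Icc 1 (q + 1), (V ^ i + Vᵀ ^ i) * (V ^ i + Vᵀ ^ i)
      = J - 1 + (2 * (q + 1) : ℤ) • 1 := by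
    have : ∀ i ∈ Finset.range (q + 1),
        (V ^ (i + 1) + Vᵀ ^ (i + 1)) * (V ^ (i + 1) + Vᵀ ^ (i + 1)) =
        (V ^ (2 * (i + 1)) + V ^ (2 * (q + 1) + 1 - 2 * (i + 1))) + (2 : ℤ) • 1 := by
      intro i hi
      have := Finset.mem_range.mp hi
      rw [hT _ (by omega), add_mul, mul_add, mul_add, ← pow_add, ← pow_add, ← pow_add, ← pow_add,
        show i + 1 + (2 * q + 3 - (i + 1)) = 2 * q + 3 by omega,
        show (2 * q + 3 - (i + 1)) + (i + 1) = 2 * q + 3 by omega,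
        show (2 * q + 3 - (i + 1)) + (2 * q + 3 - (i + 1)) =
          (2 * q + 3) + (2 * (q + 1) + 1 - 2 * (i + 1)) by omega,
        pow_add V (2 * q + 3), hP, one_mul, two_mul (i + 1), two_smul]
      abel
    rw [hIcc, Finset.sum_congr rfl this, Finset.sum_add_distrib, aux_s2 (fun k => V ^ k), hS]
    congr 1
    rw [Finset.sum_const, Finset.card_range, ← natCast_zsmul, smul_smul]
    congr 1
    push_cast
    ring
  have h3 := Finset.sum_filter_add_sum_filter_not
    ((Finset.Icc 1 (q + 1)) ×ˢ (Finset.Icc 1 (q + 1))) (fun p => p.1 ≠ p.2)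
    (fun p => (V ^ p.1 + Vᵀ ^ p.1) * (V ^ p.2 + Vᵀ ^ p.2))
  have h4 : ∑ p ∈ ((Finset.Icc 1 (q + 1)) ×ˢ (Finset.Icc 1 (q + 1))) with ¬ (p.1 ≠ p.2),
      (V ^ p.1 + Vᵀ ^ p.1) * (V ^ p.2 + Vᵀ ^ p.2) = J - 1 + (2 * (q + 1) : ℤ) • 1 := by
    rw [← h2, Finset.sum_filter, Finset.sum_product]
    apply Finset.sum_congr rfl
    intro i hi
    simp only [ne_eq, not_not]
    rw [Finset.sum_ite_eq, if_pos hi]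
  have h5 := Finset.sum_mul_sum (Finset.Icc 1 (q + 1)) (Finset.Icc 1 (q + 1))
    (fun i => V ^ i + Vᵀ ^ i) (fun i => V ^ i + Vᵀ ^ i)
  rw [h4, Finset.sum_product] at h3
  replace h3 := h3.trans h5.symm
  rw [h1] at h3
  rw [eq_sub_of_add_eq h3, sub_mul, mul_sub, hJJ]
  push_cast
  simp only [mul_one, one_mul]
  module
end

section
/- Let q be a power of an odd prime, let φ, C_{a,α} (a ∈ 𝔽_q ∪ {y}) be as in the context, let V be the (2q+3)×(2q+3) cyclic shift permutation matrix, and let ψ : 𝔽_q ∪ {y} → {1, 2, …, q+1} be any bijection. For α ∈ 𝔽_q define the (2q+3)q² × (2q+3)q² matrix N_α = Σ_{a ∈ 𝔽_q ∪ {y}} (V^{ψ(a)} + V^{−ψ(a)}) ⊗ C_{a,α}. Then for all α, β ∈ 𝔽_q: N_α·N_β = 2q²·(I_{2q+3} ⊗ I_q ⊗ φ(α+β)) + 2q·(I_{2q+3} ⊗ (φ(α+β) − I_q) ⊗ J_q) + 2q·J_{(2q+3)q²} + q·Σ_{a ∈ 𝔽_q ∪ {y}} (V^{2ψ(a)} +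 V^{−2ψ(a)}) ⊗ C_{a,α+β}. -/
open Matrix Kronecker

/-- The family C_{a,α} for a ∈ 𝔽_q ∪ {y}, where `none` plays the role of y. -/
def Cext (F : Type*) [Field F] [Fintype F] [DecidableEq F] :
    Option F → F → Matrix (F × F) (F × F) ℤ
  | some γ, α => Cmat F γ α
  | none, α => CyMat F α

/-- N_α = Σ_{a ∈ 𝔽_q ∪ {y}} (V^{ψ(a)} + V^{−ψ(a)}) ⊗ C_{a,α}. -/
def Nmat (F : Type*) [Field F] [Fintype F] [DecidableEq F]
    (ψ : Option F → ℕ) (α : F) :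
    Matrix (Fin (2 * Fintype.card F + 3) × (F × F))
      (Fin (2 * Fintype.card F + 3) × (F × F)) ℤ :=
  ∑ a : Option F,
    (shiftV (2 * Fintype.card F + 3) ^ ψ a +
      (shiftV (2 * Fintype.card F + 3))ᵀ ^ ψ a) ⊗ₖ Cext F a α

lemma aux_phi_mul {F : Type*} [AddCommGroup F] [Fintype F] [DecidableEq F] (x y u v : F) :
    ∑ r : F, phiMat F x u r * phiMat F y r v = phiMat F (x + y) u v := by
  simp only [phiMat, Matrix.of_apply]
  rw [Finset.sum_eq_single (v + y)]
  · simp only [if_true, mul_one]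
    congr 1
    rw [add_assoc, add_comm y x]
  · intro b _ hb
    simp [hb]
  · simp

lemma aux_phi_col {F : Type*} [AddCommGroup F] [Fintype F] [DecidableEq F] (x v : F) :
    ∑ r : F, phiMat F x r v = 1 := by
  simp [phiMat]

lemma aux_phi_row {F : Type*} [AddCommGroup F] [Fintype F] [DecidableEq F] (x u : F) :
    ∑ r : F, phiMat F x u r = 1 := by
  simp only [phiMat, Matrix.of_apply, ← sub_eq_iff_eq_add]
  simp

lemma aux_phi_lin {F : Type*} [Field F] [Fintype F] [DecidableEq F] (c d u v : F) (hc : c ≠ 0) :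
    ∑ r : F, phiMat F (c * r + d) u v = 1 := by
  simp only [phiMat, Matrix.of_apply]
  rw [Finset.sum_eq_single ((u - v - d) / c)]
  · rw [if_pos]
    field_simp
    ring
  · intro b _ hb
    rw [if_neg]
    rintro rfl
    apply hb
    field_simp
    ring
  · simp

lemma aux_C_same (F : Type*) [Field F] [Fintype F] [DecidableEq F] (a : Option F) (α β : F) :
    Cext F a α * Cext F a β = (Fintype.card F : ℤ) • Cext F a (α + β) := by
  ext ⟨p1, p2⟩ ⟨r1, r2⟩
  rw [Matrix.mul_apply, Fintype.sum_prod_type]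
  cases a with
  | some γ =>
    simp only [Cext, Cmat, Matrix.of_apply, Matrix.smul_apply, aux_phi_mul]
    have : ∀ x : F, γ * (x - p1) + α + (γ * (r1 - x) + β) = γ * (r1 - p1) + (α + β) := by
      intro x; ring
    simp [this]
  | none =>
    simp only [Cext, CyMat, allOnes, Matrix.kroneckerMap_apply, Matrix.of_apply,
      Matrix.smul_apply, mul_one, Finset.sum_const, ← Finset.smul_sum, aux_phi_mul]
    simp

lemma aux_C_diff (F : Type*) [Field F] [Fintype F] [DecidableEq F] (a b : Option F) (hab : a ≠ b)
    (α β : F) :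
    Cext F a α * Cext F b β = allOnes (F × F) := by
  ext ⟨p1, p2⟩ ⟨r1, r2⟩
  rw [Matrix.mul_apply, Fintype.sum_prod_type]
  rcases a with _ | γ <;> rcases b with _ | δ
  · exact absurd rfl hab
  · simp only [Cext, CyMat, Cmat, allOnes, Matrix.kroneckerMap_apply, Matrix.of_apply, mul_one,
      ← Finset.mul_sum, aux_phi_col, aux_phi_row]
  · simp only [Cext, CyMat, Cmat, allOnes, Matrix.kroneckerMap_apply, Matrix.of_apply, mul_one,
      ← Finset.sum_mul, aux_phi_col, aux_phi_row, one_mul]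
  · simp only [Cext, Cmat, allOnes, Matrix.of_apply, aux_phi_mul]
    have : ∀ x : F, γ * (x - p1) + α + (δ * (r1 - x) + β)
        = (γ - δ) * x + (δ * r1 - γ * p1 + α + β) := by
      intro x; ring
    simp only [this]
    apply aux_phi_lin
    intro h
    apply hab
    rw [sub_eq_zero.mp h]

lemma aux_C_sum (F : Type*) [Field F] [Fintype F] [DecidableEq F] (δ : F) :
    ∑ a, Cext F a δ = (Fintype.card F : ℤ) • ((1 : Matrix F F ℤ) ⊗ₖ phiMat F δ) +
      (phiMat F δ - 1) ⊗ₖ allOnes F + allOnes (F × F) := by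
  ext ⟨p1, p2⟩ ⟨r1, r2⟩
  rw [Fintype.sum_option]
  simp only [Cext, CyMat, Cmat, Matrix.add_apply, Matrix.sum_apply, Matrix.smul_apply,
    Matrix.kroneckerMap_apply, Matrix.sub_apply, Matrix.of_apply]
  by_cases h : p1 = r1
  · subst h
    simp [allOnes]
    ring
  · have : ∀ x : F, x * (r1 - p1) + δ = (r1 - p1) * x + δ := by intro x; ring
    simp only [this]
    rw [aux_phi_lin _ _ _ _ (sub_ne_zero.mpr (Ne.symm h))]
    simp [allOnes, Matrix.one_apply, h]

lemma aux_V_pow (m : ℕ) (k : ℕ) (i j : Fin m) :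
    (shiftV m ^ k) i j = if (j : ℕ) = ((i : ℕ) + k) % m then 1 else 0 := by
  induction k generalizing j with
  | zero =>
    simp [Matrix.one_apply, Nat.mod_eq_of_lt i.2, Fin.ext_iff, eq_comm]
  | succ k ih =>
    have hm : 0 < m := i.pos
    rw [pow_succ, Matrix.mul_apply, Finset.sum_eq_single ⟨(i + k) % m, Nat.mod_lt _ hm⟩]
    · rw [ih]
      simp [shiftV, add_assoc]
    · intro b _ hb
      rw [ih, if_neg, zero_mul]
      intro h
      exact hb (Fin.ext h)
    · simp

lemma aux_V_mul (m : ℕ) : shiftV m * (shiftV m)ᵀ = 1 := by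
  ext i j
  have hm : 0 < m := i.pos
  rw [Matrix.mul_apply, Finset.sum_eq_single ⟨(i + 1) % m, Nat.mod_lt _ hm⟩]
  · simp only [shiftV, Matrix.transpose_apply, Matrix.of_apply, if_true, one_mul, Matrix.one_apply,
      Fin.ext_iff]
    congr 1
    apply propext
    constructor
    · intro h
      have h2 : (i : ℕ) ≡ j [MOD m] := Nat.ModEq.add_right_cancel' 1 h
      exact Nat.ModEq.eq_of_lt_of_lt h2 i.2 j.2
    · intro h; rw [h]
  · intro b _ hb
    simp only [shiftV, Matrix.transpose_apply, Matrix.of_apply]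
    rw [if_neg, zero_mul]
    intro h
    exact hb (Fin.ext h)
  · simp

def auxW (m k : ℕ) : Matrix (Fin m) (Fin m) ℤ := shiftV m ^ k + (shiftV m)ᵀ ^ k

lemma auxW_sq (m k : ℕ) : auxW m k * auxW m k = auxW m (2 * k) + (2 : ℤ) • 1 := by
  have h1 := aux_V_mul m
  have h2 : (shiftV m)ᵀ * shiftV m = 1 := mul_eq_one_comm.mp h1
  have hc : Commute (shiftV m) (shiftV m)ᵀ := h1.trans h2.symm
  have h3 : shiftV m ^ k * (shiftV m)ᵀ ^ k = 1 := by rw [← hc.mul_pow, h1, one_pow]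
  have h4 : (shiftV m)ᵀ ^ k * shiftV m ^ k = 1 := by rw [← hc.symm.mul_pow, h2, one_pow]
  unfold auxW
  rw [add_mul, mul_add, mul_add, h3, h4, two_mul, pow_add, pow_add, two_smul]
  abel

lemma auxW_apply (m k : ℕ) (hk : 1 ≤ k) (hk' : k < m) (hm : Odd m) (i j : Fin m) :
    auxW m k i j = if ((j : ℕ) = i + k ∨ (j : ℕ) + m = i + k ∨ (i : ℕ) = j + k ∨ (i : ℕ) + m = j + k)
      then 1 else 0 := by
  have key : ∀ i j : Fin m, ((j : ℕ) = ((i : ℕ) + k) % m) ↔ ((j : ℕ) = i + k ∨ (j : ℕ) + m = i + k) := by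
    intro i j
    have hi := i.2
    have hj := j.2
    by_cases h : (i : ℕ) + k < m
    · rw [Nat.mod_eq_of_lt h]; omega
    · rw [Nat.mod_eq_sub_mod (by omega), Nat.mod_eq_of_lt (by omega)]; omega
  unfold auxW
  rw [← Matrix.transpose_pow, Matrix.add_apply, Matrix.transpose_apply, aux_V_pow, aux_V_pow]
  simp only [key]
  obtain ⟨n, rfl⟩ := hm
  have hi := i.2
  have hj := j.2
  split_ifs <;> first | rfl | omega

lemma auxW_sum (q c : ℕ) (hc : c = 1 ∨ c = 2) :
    ∑ k ∈ Finset.Icc 1 (q + 1), auxW (2 * q + 3) (c * k) = allOnes _ - 1 := by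
  ext i j
  have hi := i.2
  have hj := j.2
  have hodd : Odd (2 * q + 3) := ⟨q + 1, by ring⟩
  rw [Matrix.sum_apply]
  have h1 : ∀ k ∈ Finset.Icc 1 (q + 1), auxW (2 * q + 3) (c * k) i j =
      if ((j : ℕ) = i + c * k ∨ (j : ℕ) + (2 * q + 3) = i + c * k ∨ (i : ℕ) = j + c * k
        ∨ (i : ℕ) + (2 * q + 3) = j + c * k) then 1 else 0 := by
    intro k hk
    rw [Finset.mem_Icc] at hk
    apply auxW_apply _ _ _ _ hodd
    · rcases hc with rfl | rfl <;> omega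
    · rcases hc with rfl | rfl <;> omega
  rw [Finset.sum_congr rfl h1, Matrix.sub_apply, Matrix.one_apply]
  by_cases hij : i = j
  · subst hij
    simp only [allOnes, Matrix.of_apply, if_true, sub_self]
    apply Finset.sum_eq_zero
    intro k hk
    rw [Finset.mem_Icc] at hk
    rw [if_neg]
    rcases hc with rfl | rfl <;> omega
  · have hij' : (i : ℕ) ≠ j := fun h => hij (Fin.ext h)
    obtain ⟨k0, hk0, hk1, hk2⟩ : ∃ k0, 1 ≤ k0 ∧ k0 ≤ q + 1 ∧ ((j : ℕ) = i + c * k0 ∨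
        (j : ℕ) + (2 * q + 3) = i + c * k0 ∨ (i : ℕ) = j + c * k0
        ∨ (i : ℕ) + (2 * q + 3) = j + c * k0) := by
      by_contra! hcon
      rcases hc with rfl | rfl
      · have a1 := hcon (j - i)
        have a2 := hcon (i - j)
        have a3 := hcon (2 * q + 3 - (j - i))
        have a4 := hcon (2 * q + 3 - (i - j))
        omega
      · have a1 := hcon ((j - i) / 2)
        have a2 := hcon ((i - j) / 2)
        have a3 := hcon ((2 * q + 3 - (j - i)) / 2)
        have a4 := hcon ((2 * q + 3 - (i - j)) / 2)
        omega
    rw [Finset.sum_eq_single k0]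
    · rw [if_pos hk2, if_neg hij]
      simp [allOnes]
    · intro k hk hne
      rw [Finset.mem_Icc] at hk
      rw [if_neg]
      rcases hc with rfl | rfl <;> omega
    · intro h
      exact absurd (Finset.mem_Icc.mpr ⟨hk0, hk1⟩) h

lemma aux_reindex {F : Type*} [Fintype F] [DecidableEq F] {M : Type*} [AddCommMonoid M]
    (ψ : Option F → ℕ)
    (hmem : ∀ a, ψ a ∈ Finset.Icc 1 (Fintype.card F + 1))
    (hinj : Function.Injective ψ) (f : ℕ → M) :
    ∑ a, f (ψ a) = ∑ k ∈ Finset.Icc 1 (Fintype.card F + 1), f k := by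
  have him : Finset.univ.image ψ = Finset.Icc 1 (Fintype.card F + 1) := by
    apply Finset.eq_of_subset_of_card_le
    · intro x hx
      obtain ⟨a, _, rfl⟩ := Finset.mem_image.mp hx
      exact hmem a
    · rw [Finset.card_image_of_injective _ hinj]
      simp
  rw [← him, Finset.sum_image (fun a _ b _ h => hinj h)]

lemma aux_ones_mul (ι : Type*) [Fintype ι] :
    allOnes ι * allOnes ι = (Fintype.card ι : ℤ) • allOnes ι := by
  ext i j
  simp [Matrix.mul_apply, allOnes]

lemma aux_kron_sum_left {l m n p ι : Type*} (s : Finset ι) (f : ι → Matrix l m ℤ)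
    (B : Matrix n p ℤ) : (∑ a ∈ s, f a) ⊗ₖ B = ∑ a ∈ s, f a ⊗ₖ B := by
  ext ⟨i, i'⟩ ⟨j, j'⟩
  simp [Matrix.sum_apply, Finset.sum_mul]

lemma aux_kron_sum_right {l m n p ι : Type*} (s : Finset ι) (f : ι → Matrix l m ℤ)
    (B : Matrix n p ℤ) : B ⊗ₖ (∑ a ∈ s, f a) = ∑ a ∈ s, B ⊗ₖ f a := by
  ext ⟨i, i'⟩ ⟨j, j'⟩
  simp [Matrix.sum_apply, Finset.mul_sum]

/-- the product formula
N_α·N_β = 2q²·(I ⊗ I ⊗ φ(α+β)) + 2q·(I ⊗ (φ(α+β)−I) ⊗ J) + 2q·J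
          + q·Σ_a (V^{2ψ(a)} + V^{−2ψ(a)}) ⊗ C_{a,α+β}. -/
theorem Nmat_product (F : Type*) [Field F] [Fintype F] [DecidableEq F]
    (hodd : Odd (Fintype.card F))
    (ψ : Option F → ℕ)
    (hmem : ∀ a, ψ a ∈ Finset.Icc 1 (Fintype.card F + 1))
    (hinj : Function.Injective ψ)
    (α β : F) :
    Nmat F ψ α * Nmat F ψ β =
      (2 * (Fintype.card F : ℤ) ^ 2) •
        ((1 : Matrix (Fin (2 * Fintype.card F + 3)) (Fin (2 * Fintype.card F + 3)) ℤ) ⊗ₖ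
          ((1 : Matrix F F ℤ) ⊗ₖ phiMat F (α + β))) +
      (2 * (Fintype.card F : ℤ)) •
        ((1 : Matrix (Fin (2 * Fintype.card F + 3)) (Fin (2 * Fintype.card F + 3)) ℤ) ⊗ₖ
          ((phiMat F (α + β) - 1) ⊗ₖ allOnes F)) +
      (2 * (Fintype.card F : ℤ)) •
        allOnes (Fin (2 * Fintype.card F + 3) × (F × F)) +
      (Fintype.card F : ℤ) •
        ∑ a : Option F,
          (shiftV (2 * Fintype.card F + 3) ^ (2 * ψ a) +
            (shiftV (2 * Fintype.card F + 3))ᵀ ^ (2 * ψ a)) ⊗ₖ Cext F a (α + β) := by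
  have hW : ∀ k, shiftV (2 * Fintype.card F + 3) ^ k + (shiftV (2 * Fintype.card F + 3))ᵀ ^ k
      = auxW (2 * Fintype.card F + 3) k := fun _ => rfl
  unfold Nmat
  simp only [hW]
  have s1 : ∑ a, auxW (2 * Fintype.card F + 3) (ψ a) = allOnes _ - 1 := by
    rw [aux_reindex ψ hmem hinj (fun k => auxW (2 * Fintype.card F + 3) k)]
    simpa using auxW_sum (Fintype.card F) 1 (Or.inl rfl)
  have s2 : ∑ a, auxW (2 * Fintype.card F + 3) (2 * ψ a) = allOnes _ - 1 := by
    rw [aux_reindex ψ hmem hinj (fun k => auxW (2 * Fintype.card F + 3) (2 * k))]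
    exact auxW_sum (Fintype.card F) 2 (Or.inr rfl)
  have hC := aux_C_sum F (α + β)
  set q := Fintype.card F with hq
  set W : Option F → Matrix (Fin (2 * q + 3)) (Fin (2 * q + 3)) ℤ := fun a => auxW _ (ψ a) with hWd
  have hsq : ∀ a, W a * W a = auxW (2 * q + 3) (2 * ψ a) + (2 : ℤ) • 1 := fun a => auxW_sq _ _
  have step : ∀ a b, (W a ⊗ₖ Cext F a α) * (W b ⊗ₖ Cext F b β) =
      (W a * W b) ⊗ₖ allOnes (F × F) +
      if a = b then (W a * W a) ⊗ₖ ((q : ℤ) • Cext F a (α + β) - allOnes (F × F)) else 0 := by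
    intro a b
    rw [← Matrix.mul_kronecker_mul]
    split_ifs with h
    · subst h
      rw [aux_C_same, ← Matrix.kronecker_add]
      congr 1
      abel
    · rw [aux_C_diff F a b h, add_zero]
  have e1 : (∑ a, W a ⊗ₖ Cext F a α) * (∑ a, W a ⊗ₖ Cext F a β) =
      ((∑ a, W a) * (∑ a, W a)) ⊗ₖ allOnes (F × F) +
      ∑ a, (W a * W a) ⊗ₖ ((q : ℤ) • Cext F a (α + β) - allOnes (F × F)) := by
    rw [Finset.sum_mul_sum, Finset.sum_mul_sum]
    simp only [step, Finset.sum_add_distrib, aux_kron_sum_left]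
    simp
  have e2 : ∑ a, (W a * W a) ⊗ₖ ((q : ℤ) • Cext F a (α + β) - allOnes (F × F)) =
      (q : ℤ) • ∑ a, auxW (2 * q + 3) (2 * ψ a) ⊗ₖ Cext F a (α + β)
      + (2 * q : ℤ) • ((1 : Matrix (Fin (2 * q + 3)) (Fin (2 * q + 3)) ℤ) ⊗ₖ
          ∑ a, Cext F a (α + β))
      - (∑ a, auxW (2 * q + 3) (2 * ψ a)) ⊗ₖ allOnes (F × F)
      - (2 * (q + 1) : ℤ) • ((1 : Matrix (Fin (2 * q + 3)) (Fin (2 * q + 3)) ℤ) ⊗ₖ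
          allOnes (F × F)) := by
    have h5 : (2 * (q + 1) : ℤ) • ((1 : Matrix (Fin (2 * q + 3)) (Fin (2 * q + 3)) ℤ) ⊗ₖ
          allOnes (F × F)) = ∑ a : Option F, (2 : ℤ) •
          ((1 : Matrix (Fin (2 * q + 3)) (Fin (2 * q + 3)) ℤ) ⊗ₖ allOnes (F × F)) := by
      rw [Finset.sum_const, Finset.card_univ, Fintype.card_option, ← hq, ← Nat.cast_smul_eq_nsmul ℤ,
        smul_smul]
      congr 1
      push_cast
      ring
    rw [h5, aux_kron_sum_left, aux_kron_sum_right, Finset.smul_sum, Finset.smul_sum,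
      ← Finset.sum_add_distrib, ← Finset.sum_sub_distrib, ← Finset.sum_sub_distrib]
    apply Finset.sum_congr rfl
    intro a _
    rw [hsq]
    ext ⟨i, i'⟩ ⟨j, j'⟩
    simp only [Matrix.kroneckerMap_apply, Matrix.add_apply, Matrix.sub_apply, Matrix.smul_apply,
      smul_eq_mul]
    push_cast
    ring
  change (∑ a, W a ⊗ₖ Cext F a α) * (∑ a, W a ⊗ₖ Cext F a β) = _
  rw [e1, e2, s2, hC]
  have s1' : ∑ a, W a = allOnes _ - 1 := s1
  have s3 : (∑ a, W a) * (∑ a, W a) = (2 * q + 1 : ℤ) • allOnes _ + 1 := by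
    rw [s1', sub_mul, mul_sub, aux_ones_mul, Fintype.card_fin, one_mul, mul_one]
    ext i j
    simp only [Matrix.add_apply, Matrix.sub_apply, Matrix.smul_apply, smul_eq_mul]
    push_cast
    ring
  rw [s3]
  generalize (∑ a, auxW (2 * q + 3) (2 * ψ a) ⊗ₖ Cext F a (α + β)) = S
  ext ⟨i, i', i''⟩ ⟨j, j', j''⟩
  simp only [Matrix.kroneckerMap_apply, Matrix.add_apply, Matrix.sub_apply, Matrix.smul_apply,
      smul_eq_mul, allOnes, Matrix.of_apply]
  ring
end

section
/- Let q be a power of an odd prime, let φ, C_{a,α} (a ∈ 𝔽_q ∪ {y}) be as in the context, let V be the (2q+3)×(2q+3) cyclic shift permutation matrix, let ψ : 𝔽_q ∪ {y} → {1, 2, …, q+1} be any bijection, and for α ∈ 𝔽_q put N_α = Σ_{a ∈ 𝔽_q ∪ {y}} (V^{ψ(a)} + V^{−ψ(a)}) ⊗ C_{a,α}, a (2q+3)q² × (2q+3)q² (0,1)-matrix. Then: (1) N_0 is the adjacency matrix of a Deza graph with parameters (q²(2q+3), 2q²+2q, 3q, 2q), i.e., N_0 is symmetric with zero diagonal, N_0·J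 = (2q²+2q)·J, and N_0² = 2q·X + 3q·Y + (2q²+2q)·I for some (0,1)-matrices X, Y with X + Y + I = J; and (2) for every α ∈ 𝔽_q with α ≠ 0, N_α is the adjacency matrix of a directed (q²(2q+3), 2q²+2q, 3q, 2q)-Deza graph of type II, i.e., N_α·J = J·N_α = (2q²+2q)·J and N_α·N_αᵀ = N_αᵀ·N_α = 2q·X + 3q·Y + (2q²+2q)·I for some (0,1)-matrices X, Y with X + Y + I = J. -/
open Matrix Kronecker

/-- The linear functionals. -/
def LL (F : Type*) [Field F] : Option F → F × F → F
  | some γ, w => w.2 + γ * w.1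
  | none, w => w.1

theorem Cext_apply (F : Type*) [Field F] [Fintype F] [DecidableEq F] (a : Option F) (α : F)
    (p p' : F × F) : Cext F a α p p' = if LL F a (p - p') = α then 1 else 0 := by
  cases a with
  | none =>
    simp only [Cext, CyMat, LL, phiMat, allOnes, kroneckerMap_apply, Matrix.of_apply, mul_one,
      Prod.fst_sub]
    congr 1
    simp only [eq_iff_iff]
    constructor
    · intro h; rw [h]; ring
    · intro h; rw [← h]; ring
  | some γ =>
    simp only [Cext, Cmat, LL, phiMat, Matrix.of_apply, Prod.fst_sub, Prod.snd_sub]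
    congr 1
    simp only [eq_iff_iff]
    constructor
    · intro h; rw [h]; ring
    · intro h; rw [← h]; ring

theorem shiftV_pow (m : ℕ) (n : ℕ) (i j : Fin m) :
    (shiftV m ^ n) i j = if (j : ℕ) = ((i : ℕ) + n) % m then 1 else 0 := by
  induction n generalizing j with
  | zero =>
    rw [pow_zero, Matrix.one_apply, add_zero, Nat.mod_eq_of_lt i.2]
    simp [Fin.ext_iff, eq_comm]
  | succ n ih =>
    have hm : 0 < m := i.pos
    rw [pow_succ, Matrix.mul_apply]
    simp only [ih]
    rw [Finset.sum_eq_single (⟨((i : ℕ) + n) % m, Nat.mod_lt _ hm⟩ : Fin m)]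
    · simp [shiftV, add_assoc]
    · intro b _ hb
      have : ¬ ((b : ℕ) = ((i : ℕ) + n) % m) := fun h => hb (Fin.ext h)
      simp [this]
    · simp

theorem exists_s (F : Type*) [Fintype F] [DecidableEq F] (m : ℕ) [NeZero m]
    (hm : m = 2 * Fintype.card F + 3)
    (ψ : Option F → ℕ)
    (hmem : ∀ a, ψ a ∈ Finset.Icc 1 (Fintype.card F + 1))
    (hinj : Function.Injective ψ) :
    ∃ s : Fin m → Option F, (∀ d, s (-d) = s d) ∧
      (∀ d e, d ≠ 0 → e ≠ 0 → s d = s e → d = e ∨ d = - e) ∧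
      ∀ i j : Fin m, ∀ a, ((if (j : ℕ) = ((i : ℕ) + ψ a) % m then 1 else 0) +
       (if (i : ℕ) = ((j : ℕ) + ψ a) % m then 1 else 0) : ℤ)
        = if i ≠ j ∧ s (j - i) = a then 1 else 0 := by
  have hsurj : ∀ n, 1 ≤ n → n ≤ Fintype.card F + 1 → ∃ a, ψ a = n := by
    have h := Finset.surj_on_of_inj_on_of_card_le (s := (Finset.univ : Finset (Option F)))
      (t := Finset.Icc 1 (Fintype.card F + 1)) (fun a _ => ψ a) (fun a _ => hmem a)
      (fun a b _ _ h => hinj h) (by simp)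
    intro n h1 h2
    obtain ⟨a, _, ha⟩ := h n (by simp [h1, h2])
    exact ⟨a, ha.symm⟩
  have hneg : ∀ d : Fin m, d ≠ 0 → ((-d : Fin m) : ℕ) = m - d := by
    intro d hd
    rw [Fin.val_neg']
    have : (d : ℕ) ≠ 0 := fun h => hd (Fin.ext (by simpa using h))
    exact Nat.mod_eq_of_lt (by have := d.2; omega)
  have hex : ∀ d : Fin m, ∃ a, d ≠ 0 → ((d : ℕ) = ψ a ∨ (d : ℕ) = m - ψ a) := by
    intro d
    by_cases hd : d = 0
    · exact ⟨none, fun h => absurd hd h⟩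
    have h0 : (d : ℕ) ≠ 0 := fun h => hd (Fin.ext (by simpa using h))
    have hlt := d.2
    by_cases h : (d : ℕ) ≤ Fintype.card F + 1
    · obtain ⟨a, ha⟩ := hsurj d (by omega) h
      exact ⟨a, fun _ => Or.inl ha.symm⟩
    · obtain ⟨a, ha⟩ := hsurj (m - d) (by omega) (by omega)
      exact ⟨a, fun _ => Or.inr (by omega)⟩
  choose s hs using hex
  simp only [Finset.mem_Icc] at hmem
  have huniq : ∀ d : Fin m, ∀ a, d ≠ 0 → ((d : ℕ) = ψ a ∨ (d : ℕ) = m - ψ a) → s d = a := by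
    intro d a hd h
    apply hinj
    have h1 := hs d hd
    have := hmem a
    have := hmem (s d)
    omega
  refine ⟨s, ?_, ?_, ?_⟩
  · intro d
    by_cases hd : d = 0
    · simp [hd]
    · apply huniq
      · simpa using hd
      · rw [hneg d hd]
        have := hs d hd
        have := hmem (s d)
        omega
  · intro d e hd he h
    have h1 := hs d hd
    have h2 := hs e he
    rw [← h] at h2
    have := hmem (s d)
    have h3 : (d : ℕ) = e ∨ (d : ℕ) = m - e := by omega
    rcases h3 with h3 | h3
    · exact Or.inl (Fin.ext h3)
    · right; apply Fin.ext; rw [hneg e he, h3]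
  · intro i j a
    have ha := hmem a
    have hi := i.2
    have hj := j.2
    have e1 : ((i : ℕ) + ψ a) % m = if (i : ℕ) + ψ a < m then (i : ℕ) + ψ a else i + ψ a - m := by
      split_ifs with h
      · exact Nat.mod_eq_of_lt h
      · rw [Nat.mod_eq_sub_mod (by omega)]; exact Nat.mod_eq_of_lt (by omega)
    have e2 : ((j : ℕ) + ψ a) % m = if (j : ℕ) + ψ a < m then (j : ℕ) + ψ a else j + ψ a - m := by
      split_ifs with h
      · exact Nat.mod_eq_of_lt h
      · rw [Nat.mod_eq_sub_mod (by omega)]; exact Nat.mod_eq_of_lt (by omega)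
    rw [e1, e2]
    by_cases hij : i = j
    · subst hij
      have : ¬ ((i : ℕ) = if (i : ℕ) + ψ a < m then (i : ℕ) + ψ a else i + ψ a - m) := by
        split_ifs <;> omega
      simp [this]
    · have hij' : (i : ℕ) ≠ j := fun h => hij (Fin.ext h)
      have hd : j - i ≠ 0 := sub_ne_zero.2 (Ne.symm hij)
      have hv : ((j - i : Fin m) : ℕ) = if (i : ℕ) ≤ j then (j : ℕ) - i else m + j - i := by
        rw [Fin.val_sub]
        split_ifs with h
        · rw [Nat.mod_eq_sub_mod (by omega)]
          rw [Nat.mod_eq_of_lt (by omega)]; omega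
        · rw [Nat.mod_eq_of_lt (by omega)]; omega
      have key : s (j - i) = a ↔
          (((j - i : Fin m) : ℕ) = ψ a ∨ ((j - i : Fin m) : ℕ) = m - ψ a) :=
        ⟨fun h => h ▸ hs _ hd, huniq _ _ hd⟩
      simp only [key, hv, ne_eq, hij, not_false_eq_true, true_and]
      split_ifs <;> first | rfl | omega

theorem inner_eq (F : Type*) [Field F] [Fintype F] [DecidableEq F] (a b : Option F) (α : F)
    (p p' : F × F) :
    (∑ r : F × F, (if LL F a (p - r) = α then 1 else 0) *
      (if LL F b (p' - r) = α then 1 else 0) : ℤ) =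
    if a = b then (if LL F a (p - p') = 0 then (Fintype.card F : ℤ) else 0) else 1 := by
  simp only [← ite_and, mul_ite, mul_one, mul_zero, ite_mul, one_mul, zero_mul]
  by_cases hab : a = b
  · subst hab
    simp only [if_true]
    by_cases h0 : LL F a (p - p') = 0
    · rw [if_pos h0]
      have : ∀ r, (LL F a (p' - r) = α ∧ LL F a (p - r) = α) ↔ LL F a (p - r) = α := by
        intro r
        have : LL F a (p' - r) = LL F a (p - r) - LL F a (p - p') := by
          cases a <;> simp [LL] <;> ring
        rw [this, h0]; simp
      simp only [this]
      cases a with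
      | none =>
        simp only [LL, Fintype.sum_prod_type, Prod.fst_sub]
        have : ∀ x : F, p.1 - x = α ↔ x = p.1 - α := by
          intro x; constructor <;> intro h
          · rw [← h]; ring
          · rw [h]; ring
        simp [this]
      | some γ =>
        simp only [LL, Fintype.sum_prod_type, Prod.fst_sub, Prod.snd_sub]
        have : ∀ x y : F, p.2 - y + γ * (p.1 - x) = α ↔ y = p.2 + γ * (p.1 - x) - α := by
          intro x y; constructor <;> intro h
          · rw [← h]; ring
          · rw [h]; ring
        simp [this]
    · rw [if_neg h0]
      apply Finset.sum_eq_zero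
      intro r _
      rw [if_neg]
      rintro ⟨h1, h2⟩
      apply h0
      have : LL F a (p - p') = LL F a (p - r) - LL F a (p' - r) := by
          cases a <;> simp [LL] <;> ring
      rw [this, h1, h2, sub_self]
  · rw [if_neg hab]
    have : ∃ r0 : F × F, ∀ r, (LL F b (p' - r) = α ∧ LL F a (p - r) = α) ↔ r = r0 := by
      cases a with
      | none =>
        cases b with
        | none => exact absurd rfl hab
        | some γ =>
          refine ⟨(p.1 - α, p'.2 + γ * (p'.1 - (p.1 - α)) - α), ?_⟩
          rintro ⟨x, y⟩
          simp only [LL, Prod.fst_sub, Prod.snd_sub, Prod.mk.injEq]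
          constructor
          · rintro ⟨h1, h2⟩
            have hx : x = p.1 - α := by rw [← h2]; ring
            refine ⟨hx, ?_⟩
            rw [← hx]; linear_combination - h1
          · rintro ⟨rfl, rfl⟩
            constructor <;> ring
      | some δ =>
        cases b with
        | none =>
          refine ⟨(p'.1 - α, p.2 + δ * (p.1 - (p'.1 - α)) - α), ?_⟩
          rintro ⟨x, y⟩
          simp only [LL, Prod.fst_sub, Prod.snd_sub, Prod.mk.injEq]
          constructor
          · rintro ⟨h1, h2⟩
            have hx : x = p'.1 - α := by rw [← h1]; ring
            refine ⟨hx, ?_⟩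
            rw [← hx]; linear_combination - h2
          · rintro ⟨rfl, rfl⟩
            constructor <;> ring
        | some γ =>
          have hne : δ - γ ≠ 0 := sub_ne_zero.2 (fun h => hab (by rw [h]))
          obtain ⟨x0, hx0⟩ : ∃ x0, x0 * (δ - γ) = p.2 - p'.2 + δ * p.1 - γ * p'.1 :=
            ⟨_, div_mul_cancel₀ _ hne⟩
          refine ⟨(x0, p.2 + δ * (p.1 - x0) - α), ?_⟩
          rintro ⟨x, y⟩
          simp only [LL, Prod.fst_sub, Prod.snd_sub, Prod.mk.injEq]
          constructor
          · rintro ⟨h1, h2⟩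
            have hx : x = x0 := by
              apply mul_right_cancel₀ hne
              rw [hx0]; linear_combination h1 - h2
            refine ⟨hx, ?_⟩
            rw [← hx]; linear_combination - h2
          · rintro ⟨rfl, rfl⟩
            constructor
            · linear_combination hx0
            · ring
    obtain ⟨r0, h⟩ := this
    simp [h]

theorem sum_LL_zero (F : Type*) [Field F] [Fintype F] [DecidableEq F] (w : F × F) (hw : w ≠ 0) :
    (∑ a : Option F, if LL F a w = 0 then 1 else 0 : ℤ) = 1 := by
  rw [Fintype.sum_option]
  simp only [LL]
  by_cases h : w.1 = 0
  · have h2 : w.2 ≠ 0 := fun h' => hw (Prod.ext h h')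
    simp [h, h2]
  · have : ∀ γ : F, w.2 + γ * w.1 = 0 ↔ γ = - w.2 / w.1 := by
      intro γ
      rw [eq_div_iff h]
      constructor <;> intro h' <;> linear_combination h'
    simp [this, h]

theorem LL_count (F : Type*) [Field F] [Fintype F] [DecidableEq F] (a : Option F) (α : F)
    (p : F × F) :
    (∑ r : F × F, (if LL F a (p - r) = α then 1 else 0) : ℤ) = Fintype.card F := by
  have h := inner_eq F a a α p p
  have h0 : LL F a (p - p) = 0 := by cases a <;> simp [LL]
  rw [if_pos rfl, if_pos h0] at h
  rw [← h]
  refine Finset.sum_congr rfl fun r _ => ?_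
  split_ifs <;> simp

/-- entries of N N^T -/
def DD (F : Type*) [Field F] [Fintype F] [DecidableEq F] (m : ℕ) [NeZero m]
    (s : Fin m → Option F) (x y : Fin m × (F × F)) : ℤ :=
  ∑ k : Fin m, if x.1 ≠ k ∧ y.1 ≠ k then
    (if s (k - x.1) = s (k - y.1) then
      (if LL F (s (k - x.1)) (x.2 - y.2) = 0 then (Fintype.card F : ℤ) else 0) else 1) else 0

theorem sum_s (F : Type*) [Fintype F] [DecidableEq F] (m : ℕ) [NeZero m]
    (ψ : Option F → ℕ) (s : Fin m → Option F)
    (hs : ∀ i j : Fin m, ∀ a, ((if (j : ℕ) = ((i : ℕ) + ψ a) % m then 1 else 0) +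
       (if (i : ℕ) = ((j : ℕ) + ψ a) % m then 1 else 0) : ℤ)
        = if i ≠ j ∧ s (j - i) = a then 1 else 0) (i : Fin m) (g : Option F → ℤ) :
    ∑ k : Fin m, (if i ≠ k then g (s (k - i)) else 0) = 2 * ∑ a, g a := by
  have h1 : ∀ k : Fin m, (if i ≠ k then g (s (k - i)) else 0) =
      ∑ a, (if i ≠ k ∧ s (k - i) = a then 1 else 0) * g a := by
    intro k
    by_cases h : i = k <;> simp [h]
  simp only [h1, ← hs]
  rw [Finset.sum_comm, Finset.mul_sum]
  refine Finset.sum_congr rfl fun a _ => ?_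
  rw [← Finset.sum_mul, Finset.sum_add_distrib]
  have hm : 0 < m := i.pos
  have e1 : (∑ k : Fin m, if (k : ℕ) = ((i : ℕ) + ψ a) % m then 1 else 0 : ℤ) = 1 := by
    rw [Finset.sum_eq_single (⟨((i : ℕ) + ψ a) % m, Nat.mod_lt _ hm⟩ : Fin m)]
    · simp
    · intro b _ hb
      exact if_neg fun h => hb (Fin.ext h)
    · simp
  have e2 : (∑ k : Fin m, if (i : ℕ) = ((k : ℕ) + ψ a) % m then 1 else 0 : ℤ) = 1 := by
    have : ∀ k : Fin m, (i : ℕ) = ((k : ℕ) + ψ a) % m ↔ k = i - Fin.ofNat m (ψ a) := by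
      intro k
      rw [eq_sub_iff_add_eq, eq_comm, Fin.ext_iff, Fin.val_add]
      simp
    simp [this]
  rw [e1, e2]; ring

theorem DD_val (F : Type*) [Field F] [Fintype F] [DecidableEq F] (m : ℕ) [NeZero m]
    (hm : m = 2 * Fintype.card F + 3)
    (ψ : Option F → ℕ) (s : Fin m → Option F) (h1 : ∀ d, s (-d) = s d)
    (h2 : ∀ d e, d ≠ 0 → e ≠ 0 → s d = s e → d = e ∨ d = - e)
    (hs : ∀ i j : Fin m, ∀ a, ((if (j : ℕ) = ((i : ℕ) + ψ a) % m then 1 else 0) +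
       (if (i : ℕ) = ((j : ℕ) + ψ a) % m then 1 else 0) : ℤ)
        = if i ≠ j ∧ s (j - i) = a then 1 else 0) (x y : Fin m × (F × F)) :
    (x = y → DD F m s x y = 2 * (Fintype.card F : ℤ) ^ 2 + 2 * (Fintype.card F : ℤ)) ∧
    (x ≠ y → DD F m s x y = 2 * (Fintype.card F : ℤ) ∨
      DD F m s x y = 3 * (Fintype.card F : ℤ)) := by
  obtain ⟨i, p⟩ := x
  obtain ⟨j, p'⟩ := y
  by_cases hij : i = j
  · subst hij
    have hD : DD F m s (i, p) (i, p') = 2 * ∑ a, (if LL F a (p - p') = 0 then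
        (Fintype.card F : ℤ) else 0) := by
      rw [← sum_s F m ψ s hs i]
      simp [DD]
    rw [hD]
    constructor
    · intro h
      have : p = p' := by simpa using h
      subst this
      have : ∀ a, LL F a (p - p) = 0 := by intro a; cases a <;> simp [LL]
      simp only [this, if_true]
      simp
      ring
    · intro h
      left
      have hp : p - p' ≠ 0 := sub_ne_zero.2 (fun h' => h (by rw [h']))
      have := sum_LL_zero F _ hp
      rw [show (∑ a, (if LL F a (p - p') = 0 then (Fintype.card F : ℤ) else 0)) =
        (Fintype.card F : ℤ) * ∑ a, (if LL F a (p - p') = 0 then 1 else 0) by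
          rw [Finset.mul_sum]; simp]
      rw [this]; ring
  · refine ⟨fun h => absurd (congrArg Prod.fst h) hij, fun _ => ?_⟩
    -- halving
    have hhalf : ∀ k : Fin m, k + k = i + j ↔
        k = (Fintype.card F + 2) • (i + j) := by
      have hmz : ∀ z : Fin m, m • z = 0 := by
        intro z
        have := card_nsmul_eq_zero (x := z)
        simpa using this
      intro k
      constructor
      · intro h
        rw [← h, ← two_nsmul, ← mul_nsmul']
        rw [show (Fintype.card F + 2) * 2 = m + 1 by omega, add_nsmul, hmz]; simp
      · rintro rfl
        rw [← add_nsmul, show (Fintype.card F + 2) + (Fintype.card F + 2) = m + 1 by omega,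
          add_nsmul, hmz]; simp
    set c : Fin m := (Fintype.card F + 2) • (i + j) with hc
    have hcc : c + c = i + j := (hhalf c).2 rfl
    have hci : i ≠ c := by
      intro h; rw [← h] at hcc; exact hij (add_left_cancel hcc)
    have hcj : j ≠ c := by
      intro h; rw [← h] at hcc; exact hij (add_right_cancel hcc).symm
    have hiff : ∀ k, i ≠ k → j ≠ k → (s (k - i) = s (k - j) ↔ k = c) := by
      intro k hi hj
      rw [← hhalf]
      constructor
      · intro h
        rcases h2 _ _ (sub_ne_zero.2 hi.symm) (sub_ne_zero.2 hj.symm) h with h | h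
        · exact absurd (sub_right_injective h) hij
        · rw [neg_sub, sub_eq_sub_iff_add_eq_add] at h
          rw [h, add_comm]
      · intro h
        rw [← h1 (k - j), neg_sub]
        congr 1
        rw [sub_eq_sub_iff_add_eq_add, h, add_comm]
    set g : ℤ := if LL F (s (c - i)) (p - p') = 0 then (Fintype.card F : ℤ) else 0 with hg
    have hD : DD F m s (i, p) (j, p') = ∑ k : Fin m, ((1 : ℤ) - (if k = i then 1 else 0)
        - (if k = j then 1 else 0) + (if k = c then g - 1 else 0)) := by
      unfold DD
      refine Finset.sum_congr rfl fun k _ => ?_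
      by_cases hki : k = i
      · subst hki; simp [hij, hci]
      by_cases hkj : k = j
      · subst hkj; simp [hki, hcj]
      simp only [ne_eq, Ne.symm hki, Ne.symm hkj, not_false_eq_true, and_self, if_true, hki, hkj,
        if_false, hiff k (Ne.symm hki) (Ne.symm hkj)]
      by_cases hkc : k = c
      · rw [hkc]; simp [hg]
      · simp [hkc]
    rw [hD]
    simp only [Finset.sum_add_distrib, Finset.sum_sub_distrib, Finset.sum_ite_eq', Finset.mem_univ,
      if_true, Finset.sum_const, Finset.card_univ, Fintype.card_fin, nsmul_eq_mul, mul_one]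
    have hmz : (m : ℤ) = 2 * Fintype.card F + 3 := by rw [hm]; push_cast; ring
    rw [hmz, hg]
    split_ifs
    · right; ring
    · left; ring

theorem Nmat_apply (F : Type*) [Field F] [Fintype F] [DecidableEq F]
    (ψ : Option F → ℕ) (s : Fin (2 * Fintype.card F + 3) → Option F)
    (hs : ∀ i j : Fin (2 * Fintype.card F + 3), ∀ a,
      ((if (j : ℕ) = ((i : ℕ) + ψ a) % (2 * Fintype.card F + 3) then 1 else 0) +
       (if (i : ℕ) = ((j : ℕ) + ψ a) % (2 * Fintype.card F + 3) then 1 else 0) : ℤ)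
        = if i ≠ j ∧ s (j - i) = a then 1 else 0) (α : F)
    (x y : Fin (2 * Fintype.card F + 3) × (F × F)) :
    Nmat F ψ α x y = if x.1 ≠ y.1 then
      (if LL F (s (y.1 - x.1)) (x.2 - y.2) = α then 1 else 0) else 0 := by
  simp only [Nmat, Matrix.sum_apply, kroneckerMap_apply, Matrix.add_apply, ← Matrix.transpose_pow,
    Matrix.transpose_apply, shiftV_pow, hs, Cext_apply]
  by_cases h : x.1 = y.1
  · simp [h]
  · simp only [ne_eq, h, not_false_eq_true, true_and, if_true]
    rw [Finset.sum_eq_single (s (y.1 - x.1))]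
    · simp
    · intro b _ hb
      simp [Ne.symm hb]
    · simp

/-- N_0 is the adjacency matrix of a Deza graph with parameters
(q²(2q+3), 2q²+2q, 3q, 2q), and for α ≠ 0, N_α is the adjacency matrix of a directed
(q²(2q+3), 2q²+2q, 3q, 2q)-Deza graph of type II. -/
theorem Nmat_deza (F : Type*) [Field F] [Fintype F] [DecidableEq F]
    (hodd : Odd (Fintype.card F))
    (ψ : Option F → ℕ)
    (hmem : ∀ a, ψ a ∈ Finset.Icc 1 (Fintype.card F + 1))
    (hinj : Function.Injective ψ) :
    -- (1) N_0 is the adjacency matrix of a Deza graph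
    ((Nmat F ψ 0)ᵀ = Nmat F ψ 0 ∧ (∀ i, Nmat F ψ 0 i i = 0) ∧
      IsZeroOne (Nmat F ψ 0) ∧
      Nmat F ψ 0 * allOnes (Fin (2 * Fintype.card F + 3) × (F × F)) =
        (2 * (Fintype.card F : ℤ) ^ 2 + 2 * (Fintype.card F : ℤ)) •
          allOnes (Fin (2 * Fintype.card F + 3) × (F × F)) ∧
      ∃ X Y : Matrix (Fin (2 * Fintype.card F + 3) × (F × F))
          (Fin (2 * Fintype.card F + 3) × (F × F)) ℤ,
        IsZeroOne X ∧ IsZeroOne Y ∧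
        X + Y + 1 = allOnes (Fin (2 * Fintype.card F + 3) × (F × F)) ∧
        Nmat F ψ 0 * Nmat F ψ 0 =
          (2 * (Fintype.card F : ℤ)) • X + (3 * (Fintype.card F : ℤ)) • Y +
          (2 * (Fintype.card F : ℤ) ^ 2 + 2 * (Fintype.card F : ℤ)) •
            (1 : Matrix (Fin (2 * Fintype.card F + 3) × (F × F))
              (Fin (2 * Fintype.card F + 3) × (F × F)) ℤ)) ∧
    -- (2) for α ≠ 0, N_α is the adjacency matrix of a directed Deza graph of type II
    (∀ α : F, α ≠ 0 →
      IsZeroOne (Nmat F ψ α) ∧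
      Nmat F ψ α * allOnes (Fin (2 * Fintype.card F + 3) × (F × F)) =
        (2 * (Fintype.card F : ℤ) ^ 2 + 2 * (Fintype.card F : ℤ)) •
          allOnes (Fin (2 * Fintype.card F + 3) × (F × F)) ∧
      allOnes (Fin (2 * Fintype.card F + 3) × (F × F)) * Nmat F ψ α =
        (2 * (Fintype.card F : ℤ) ^ 2 + 2 * (Fintype.card F : ℤ)) •
          allOnes (Fin (2 * Fintype.card F + 3) × (F × F)) ∧
      ∃ X Y : Matrix (Fin (2 * Fintype.card F + 3) × (F × F))
          (Fin (2 * Fintype.card F + 3) × (F × F)) ℤ,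
        IsZeroOne X ∧ IsZeroOne Y ∧
        X + Y + 1 = allOnes (Fin (2 * Fintype.card F + 3) × (F × F)) ∧
        Nmat F ψ α * (Nmat F ψ α)ᵀ =
          (2 * (Fintype.card F : ℤ)) • X + (3 * (Fintype.card F : ℤ)) • Y +
          (2 * (Fintype.card F : ℤ) ^ 2 + 2 * (Fintype.card F : ℤ)) •
            (1 : Matrix (Fin (2 * Fintype.card F + 3) × (F × F))
              (Fin (2 * Fintype.card F + 3) × (F × F)) ℤ) ∧
        (Nmat F ψ α)ᵀ * Nmat F ψ α =
          (2 * (Fintype.card F : ℤ)) • X + (3 * (Fintype.card F : ℤ)) • Y +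
          (2 * (Fintype.card F : ℤ) ^ 2 + 2 * (Fintype.card F : ℤ)) •
            (1 : Matrix (Fin (2 * Fintype.card F + 3) × (F × F))
              (Fin (2 * Fintype.card F + 3) × (F × F)) ℤ)) := by
  obtain ⟨s, h1, h2, hs⟩ := exists_s F (2 * Fintype.card F + 3) rfl ψ hmem hinj
  have hN := Nmat_apply F ψ s hs
  have hT : ∀ α, (Nmat F ψ α)ᵀ = Nmat F ψ (-α) := by
    intro α
    ext x y
    rw [Matrix.transpose_apply, hN, hN]
    have e1 : s (x.1 - y.1) = s (y.1 - x.1) := by rw [← h1, neg_sub]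
    have e2 : ∀ a, (LL F a (y.2 - x.2) = α) = (LL F a (x.2 - y.2) = -α) := by
      intro a
      have : LL F a (y.2 - x.2) = - LL F a (x.2 - y.2) := by
        cases a <;> simp [LL]; ring
      rw [this, neg_eq_iff_eq_neg]
    rw [e1]
    simp only [e2, ne_eq, eq_comm (a := y.1) (b := x.1)]
  have h01 : ∀ α, IsZeroOne (Nmat F ψ α) := by
    intro α x y
    rw [hN]
    split_ifs <;> simp
  have hrow : ∀ α, Nmat F ψ α * allOnes (Fin (2 * Fintype.card F + 3) × (F × F)) =
        (2 * (Fintype.card F : ℤ) ^ 2 + 2 * (Fintype.card F : ℤ)) •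
          allOnes (Fin (2 * Fintype.card F + 3) × (F × F)) := by
    intro α
    ext x y
    simp only [Matrix.mul_apply, allOnes, Matrix.of_apply, mul_one, Matrix.smul_apply, hN,
      smul_eq_mul]
    rw [Fintype.sum_prod_type]
    have : ∀ k : Fin (2 * Fintype.card F + 3), (∑ r : F × F, if x.1 ≠ k then
        (if LL F (s (k - x.1)) (x.2 - r) = α then 1 else 0) else 0 : ℤ) =
        if x.1 ≠ k then (Fintype.card F : ℤ) else 0 := by
      intro k
      by_cases h : x.1 = k
      · simp [h]
      · simp only [ne_eq, h, not_false_eq_true, if_true]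
        exact LL_count F _ α x.2
    simp only [this]
    rw [sum_s F _ ψ s hs x.1 (fun _ => (Fintype.card F : ℤ))]
    simp
    ring
  have hcol : ∀ α, allOnes (Fin (2 * Fintype.card F + 3) × (F × F)) * Nmat F ψ α =
        (2 * (Fintype.card F : ℤ) ^ 2 + 2 * (Fintype.card F : ℤ)) •
          allOnes (Fin (2 * Fintype.card F + 3) × (F × F)) := by
    intro α
    have h := congrArg Matrix.transpose (hrow (-α))
    rw [Matrix.transpose_mul, hT, neg_neg, Matrix.transpose_smul] at h
    exact h
  have hP : ∀ α, Nmat F ψ α * (Nmat F ψ α)ᵀ = Matrix.of (DD F _ s) := by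
    intro α
    ext x y
    simp only [Matrix.mul_apply, Matrix.transpose_apply, Matrix.of_apply, hN, DD]
    rw [Fintype.sum_prod_type]
    refine Finset.sum_congr rfl fun k _ => ?_
    by_cases hx : x.1 = k
    · simp [hx]
    by_cases hy : y.1 = k
    · simp [hy]
    simp only [ne_eq, hx, hy, not_false_eq_true, if_true, and_self]
    exact inner_eq F _ _ α x.2 y.2
  have hP2 : ∀ α, (Nmat F ψ α)ᵀ * Nmat F ψ α = Matrix.of (DD F _ s) := by
    intro α
    have h := hP (-α)
    rwa [hT, neg_neg, ← hT] at h
  have hXY : ∃ X Y : Matrix (Fin (2 * Fintype.card F + 3) × (F × F))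
          (Fin (2 * Fintype.card F + 3) × (F × F)) ℤ,
        IsZeroOne X ∧ IsZeroOne Y ∧
        X + Y + 1 = allOnes (Fin (2 * Fintype.card F + 3) × (F × F)) ∧
        Matrix.of (DD F _ s) =
          (2 * (Fintype.card F : ℤ)) • X + (3 * (Fintype.card F : ℤ)) • Y +
          (2 * (Fintype.card F : ℤ) ^ 2 + 2 * (Fintype.card F : ℤ)) •
            (1 : Matrix (Fin (2 * Fintype.card F + 3) × (F × F))
              (Fin (2 * Fintype.card F + 3) × (F × F)) ℤ) := by
    refine ⟨Matrix.of fun x y => if x = y then 0 else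
        if DD F _ s x y = 2 * (Fintype.card F : ℤ) then 1 else 0,
      Matrix.of fun x y => if x = y then 0 else
        if DD F _ s x y = 2 * (Fintype.card F : ℤ) then 0 else 1, ?_, ?_, ?_, ?_⟩
    · intro x y
      simp only [Matrix.of_apply]
      split_ifs <;> simp
    · intro x y
      simp only [Matrix.of_apply]
      split_ifs <;> simp
    · ext x y
      simp only [Matrix.add_apply, Matrix.of_apply, Matrix.one_apply, allOnes]
      split_ifs <;> simp
    · ext x y
      obtain ⟨ha, hb⟩ := DD_val F _ rfl ψ s h1 h2 hs x y
      simp only [Matrix.add_apply, Matrix.of_apply, Matrix.one_apply, Matrix.smul_apply,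
        smul_eq_mul]
      by_cases hxy : x = y
      · rw [ha hxy]; simp [hxy]
      · by_cases h : DD F _ s x y = 2 * (Fintype.card F : ℤ)
        · simp [hxy, h]
        · have := (hb hxy).resolve_left h
          simp only [hxy, h, if_false]
          rw [this]; ring
  obtain ⟨X, Y, hX, hY, hsum, hD⟩ := hXY
  have hT0 : (Nmat F ψ 0)ᵀ = Nmat F ψ 0 := by rw [hT, neg_zero]
  refine ⟨⟨hT0, ?_, h01 0, hrow 0, X, Y, hX, hY, hsum, ?_⟩, fun α _ => ⟨h01 α, hrow α, hcol α,
    X, Y, hX, hY, hsum, (hP α).trans hD, (hP2 α).trans hD⟩⟩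
  · intro i
    rw [hN]; simp
  · have h := hP 0
    rw [hT0] at h
    exact h.trans hD
end
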